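/- arXiv:1111.5458 — 2 statements merged into one kernel-verified Lean document; each statement's English description precedes it below -/
import Mathlib

section
/- Let G be a complete multipartite graph with every part of size at most 3, with k₁ parts of size 1, k₂ parts of size 2 and k₃ parts of size 3, and suppose |V(G)| ≤ 2χ(G) where χ(G) = k₁ + k₂ + k₃. Then the constant function f ≡ χ(G) satisfies all hypotheses of the main technical lemma with 𝒮 = ∅ (namely: f(v) ≥ k₃ + k₂ + i for the i-th part of size 1; f(v) ≥ k₃ + k₂ for every vertex in a part of size 2 or 3; Σ_{v∈B} f(v) ≥ |V(G)| for every part B of size 2; f(u) + f(v) ≥ |V(G)| − 1 for distinct u, v in a part of size 3; and Σ_{v∈C} f(v) ≥ |V(G)| − 1 + k₃ + k₂ + k₁ for every part C of size 3), and consequently G is on-line χ(G)-choosable. -/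
variable {V : Type} [Fintype V] [DecidableEq V]

/-- Approximations to on-line `f`-choosability of the subgraph of `G` induced on `S`:
`OnlineChoosableAux G n S f` says that the defining recursion certifies choosability
within `n` unfoldings. -/
def OnlineChoosableAux (G : SimpleGraph V) : ℕ → Finset V → (V → ℕ) → Prop
  | 0, _S, _f => False
  | n + 1, S, f =>
      ((∀ u ∈ S, ∀ v ∈ S, ¬ G.Adj u v) ∧ ∀ v ∈ S, 1 ≤ f v) ∨
      ((∃ u ∈ S, ∃ v ∈ S, G.Adj u v) ∧
        ∀ U : Finset V, U ⊆ S → U.Nonempty →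
          ∃ I : Finset V, I ⊆ U ∧ (∀ u ∈ I, ∀ v ∈ I, ¬ G.Adj u v) ∧
            OnlineChoosableAux G n (S \ I) (fun v => f v - if v ∈ U then 1 else 0))

/-- The subgraph of `G` induced on `S` is on-line `f`-choosable: the least fixed point of
the recursion “if edgeless then `f ≥ 1` everywhere, else for every nonempty `U ⊆ S`
there is an independent `I ⊆ U` with `G - I` on-line `(f - δ_U)`-choosable”. -/
def OnlineChoosable (G : SimpleGraph V) (S : Finset V) (f : V → ℕ) : Prop :=
  ∃ n, OnlineChoosableAux G n S f

set_option linter.unusedSectionVars false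
set_option linter.unusedSimpArgs false

/-- remaining budgets after the round `U` -/
def decr (U : Finset V) (f : V → ℕ) : V → ℕ := fun v => f v - if v ∈ U then 1 else 0

def sz (l : List (Finset V)) : ℕ := (l.map Finset.card).sum

/-- ordered list of parts, each vertex of a part beats `c` plus the number of earlier vertices -/
def OK (f : V → ℕ) : ℕ → List (Finset V) → Prop
  | _, [] => True
  | c, X :: l => (∀ v ∈ X, c + 1 ≤ f v) ∧ OK f (c + X.card) l

def Str (G : SimpleGraph V) (L : List (Finset V)) (T : Finset V) : Prop :=
  (∀ v, v ∈ T ↔ ∃ X ∈ L, v ∈ X) ∧ L.Pairwise (fun X Y => ∀ x ∈ X, ∀ y ∈ Y, G.Adj x y) ∧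
    ∀ X ∈ L, ∀ x ∈ X, ∀ y ∈ X, ¬ G.Adj x y

def BOK (k N : ℕ) (f : V → ℕ) (X : Finset V) : Prop :=
  X.card = 2 ∧ (∀ v ∈ X, k ≤ f v) ∧ N ≤ ∑ v ∈ X, f v

def COK (k N m : ℕ) (f : V → ℕ) (X : Finset V) : Prop :=
  X.card = 3 ∧ (∀ v ∈ X, k ≤ f v) ∧ (∀ u ∈ X, ∀ v ∈ X, u ≠ v → N ≤ f u + f v + 1) ∧
    N + m ≤ ∑ v ∈ X, f v + 1

def tot (A B C S : List (Finset V)) : ℕ := 3 * C.length + 2 * B.length + sz A + sz S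

def GInv (A B C S : List (Finset V)) (f : V → ℕ) : Prop :=
  OK f (C.length + B.length) A ∧
  (∀ X ∈ B, BOK (C.length + B.length) (tot A B C S) f X) ∧
  (∀ X ∈ C, COK (C.length + B.length) (tot A B C S) (C.length + B.length + sz A) f X) ∧
  OK f (2 * C.length + B.length + sz A) S

theorem decr_mem {U : Finset V} {f : V → ℕ} {v : V} (h : v ∈ U) : decr U f v = f v - 1 := by
  simp [decr, h]

theorem decr_not {U : Finset V} {f : V → ℕ} {v : V} (h : v ∉ U) : decr U f v = f v := by
  simp [decr, h]

theorem decr_le (U : Finset V) (f : V → ℕ) (v : V) : f v ≤ decr U f v + 1 := by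
  unfold decr; split_ifs <;> omega

theorem sum_decr (U X : Finset V) (f : V → ℕ) :
    ∑ v ∈ X, f v ≤ ∑ v ∈ X, decr U f v + (X ∩ U).card := by
  have h : (X ∩ U).card = ∑ v ∈ X, if v ∈ U then 1 else 0 := by
    rw [← Finset.filter_mem_eq_inter, Finset.card_filter]
  rw [h, ← Finset.sum_add_distrib]
  apply Finset.sum_le_sum
  intro v _
  unfold decr
  split_ifs <;> omega

theorem sz_nil : sz ([] : List (Finset V)) = 0 := rfl
theorem sz_cons (X : Finset V) (l : List (Finset V)) : sz (X :: l) = X.card + sz l := by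
  simp [sz]
theorem sz_append (l l' : List (Finset V)) : sz (l ++ l') = sz l + sz l' := by
  simp [sz]

theorem OK.mono {U : Finset V} {f : V → ℕ} {l : List (Finset V)} :
    ∀ {c c' : ℕ}, OK f c l → c' + 1 ≤ c → OK (decr U f) c' l := by
  induction l with
  | nil => intros; trivial
  | cons X l ih =>
    intro c c' h hc
    refine ⟨fun v hv => ?_, ih h.2 (by omega)⟩
    have := h.1 v hv
    have := decr_le U f v
    omega

theorem OK.mono' {U : Finset V} {f : V → ℕ} {l : List (Finset V)} :
    ∀ {c c' : ℕ}, OK f c l → c' ≤ c → (∀ X ∈ l, ∀ v ∈ X, v ∉ U) → OK (decr U f) c' l := by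
  induction l with
  | nil => intros; trivial
  | cons X l ih =>
    intro c c' h hc hU
    refine ⟨fun v hv => ?_, ih h.2 (by omega) (fun Y hY => hU Y (by simp [hY]))⟩
    have := h.1 v hv
    rw [decr_not (hU X (by simp) v hv)]
    omega

theorem OK.snoc {f : V → ℕ} {X : Finset V} {l : List (Finset V)} :
    ∀ {c : ℕ}, OK f c l → (∀ v ∈ X, c + sz l + 1 ≤ f v) → OK f c (l ++ [X]) := by
  induction l with
  | nil => intro c _ h; exact ⟨by simpa [sz] using h, trivial⟩
  | cons Y l ih =>
    intro c h hX
    refine ⟨h.1, ih h.2 fun v hv => ?_⟩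
    have := hX v hv
    rw [sz_cons] at this
    omega

theorem OK.pos {f : V → ℕ} {l : List (Finset V)} :
    ∀ {c : ℕ}, OK f c l → ∀ X ∈ l, ∀ v ∈ X, 1 ≤ f v := by
  induction l with
  | nil => simp
  | cons Y l ih =>
    intro c h X hX v hv
    rcases List.mem_cons.1 hX with rfl | hX
    · have := h.1 v hv; omega
    · exact ih h.2 X hX v hv

theorem OK.const {f : V → ℕ} {l : List (Finset V)} :
    ∀ {c : ℕ}, (∀ X ∈ l, X.card = 1) → (∀ v, c + l.length ≤ f v) → OK f c l := by
  induction l with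
  | nil => intros; trivial
  | cons Y l ih =>
    intro c h hf
    simp only [List.length_cons] at hf
    refine ⟨fun v _ => ?_, ih (fun X hX => h X (by simp [hX])) fun v => ?_⟩
    · have := hf v; omega
    · have := hf v
      rw [h Y (by simp)]; omega

theorem OK.hit {U : Finset V} {f : V → ℕ} {l : List (Finset V)} :
    ∀ {c : ℕ}, OK f c l → (∃ X ∈ l, ∃ v ∈ X, v ∈ U) →
      ∃ l₁ X l₂, l = l₁ ++ X :: l₂ ∧ (X ∩ U).Nonempty ∧
        ∀ c' ≤ c, OK (decr U f) c' (l₁ ++ (X \ U) :: l₂) := by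
  induction l with
  | nil => simp
  | cons Y l ih =>
    intro c h hh
    by_cases hY : (Y ∩ U).Nonempty
    · refine ⟨[], Y, l, rfl, hY, fun c' hc => ⟨fun v hv => ?_, ?_⟩⟩
      · rw [Finset.mem_sdiff] at hv
        rw [decr_not hv.2]
        have := h.1 v hv.1; omega
      · apply h.2.mono
        have := Finset.card_sdiff_add_card_inter Y U
        have := hY.card_pos
        omega
    · have hY' : ∀ v ∈ Y, v ∉ U := fun v hv hu => hY ⟨v, by simp [hv, hu]⟩
      obtain ⟨X, hX, v, hv, hu⟩ := hh
      rcases List.mem_cons.1 hX with rfl | hX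
      · exact absurd hu (hY' v hv)
      obtain ⟨l₁, Z, l₂, rfl, hZ, hok⟩ := ih h.2 ⟨X, hX, v, hv, hu⟩
      refine ⟨Y :: l₁, Z, l₂, rfl, hZ, fun c' hc => ⟨fun v hv => ?_, hok _ (by omega)⟩⟩
      rw [decr_not (hY' v hv)]
      have := h.1 v hv; omega

theorem Str.perm {G : SimpleGraph V} {L L' : List (Finset V)} {T : Finset V}
    (h : Str G L T) (hp : L.Perm L') : Str G L' T := by
  refine ⟨fun v => ?_, ?_, fun X hX => h.2.2 X (hp.mem_iff.2 hX)⟩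
  · rw [h.1]; simp only [hp.mem_iff]
  · exact h.2.1.perm hp (fun {X Y} hXY x hx y hy => (hXY y hy x hx).symm)

theorem Str.step {G : SimpleGraph V} {L : List (Finset V)} {T X I : Finset V}
    (h : Str G (X :: L) T) (hI : I ⊆ X) : Str G ((X \ I) :: L) (T \ I) := by
  obtain ⟨h1, h2, h3⟩ := h
  rw [List.pairwise_cons] at h2
  refine ⟨fun v => ?_, ?_, ?_⟩
  · rw [Finset.mem_sdiff, h1]
    simp only [List.mem_cons, exists_eq_or_imp, Finset.mem_sdiff]
    constructor
    · rintro ⟨h | h, hv⟩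
      · exact Or.inl ⟨h, hv⟩
      · exact Or.inr h
    · rintro (h | ⟨Y, hY, hv⟩)
      · exact ⟨Or.inl h.1, h.2⟩
      · exact ⟨Or.inr ⟨Y, hY, hv⟩, fun hvI => G.loopless.irrefl v (h2.1 Y hY v (hI hvI) v hv)⟩
  · rw [List.pairwise_cons]
    exact ⟨fun Y hY x hx => h2.1 Y hY x (Finset.mem_sdiff.1 hx).1, h2.2⟩
  · intro Y hY
    rcases List.mem_cons.1 hY with rfl | hY
    · intro x hx y hy
      exact h3 X (by simp) x (Finset.mem_sdiff.1 hx).1 y (Finset.mem_sdiff.1 hy).1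
    · exact h3 Y (by simp [hY])

theorem Str.drop {G : SimpleGraph V} {L : List (Finset V)} {T : Finset V}
    (h : Str G (∅ :: L) T) : Str G L T := by
  obtain ⟨h1, h2, h3⟩ := h
  refine ⟨fun v => ?_, (List.pairwise_cons.1 h2).2, fun X hX => h3 X (by simp [hX])⟩
  rw [h1]; simp

theorem Str.mk1 {G : SimpleGraph V} {L L' L₀ : List (Finset V)} {T X I Y : Finset V}
    (h : Str G L T) (hL : L.Perm (X :: L₀)) (hI : I ⊆ X) (hY : X \ I = Y)
    (hL' : L'.Perm (Y :: L₀)) :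
    (∀ u ∈ I, ∀ v ∈ I, ¬ G.Adj u v) ∧ Str G L' (T \ I) := by
  subst hY
  have h' := h.perm hL
  exact ⟨fun u hu v hv => h'.2.2 X (by simp) u (hI hu) v (hI hv), (h'.step hI).perm hL'.symm⟩

theorem Str.mk0 {G : SimpleGraph V} {L L' : List (Finset V)} {T X : Finset V}
    (h : Str G L T) (hL : L.Perm (X :: L')) :
    (∀ u ∈ X, ∀ v ∈ X, ¬ G.Adj u v) ∧ Str G L' (T \ X) := by
  have h' := h.perm hL
  refine ⟨fun u hu v hv => h'.2.2 X (by simp) u hu v hv, ?_⟩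
  have := h'.step (Finset.Subset.refl X)
  rw [Finset.sdiff_self] at this
  exact this.drop

theorem BOK.next {k N k' N' : ℕ} {f : V → ℕ} {U X : Finset V} (h : BOK k N f X)
    (hk : k' + 1 ≤ k ∨ (k' ≤ k ∧ ∀ v ∈ X, v ∈ U → k + 1 ≤ f v))
    (hN : N' + (X ∩ U).card ≤ N) : BOK k' N' (decr U f) X := by
  obtain ⟨h1, h2, h3⟩ := h
  refine ⟨h1, fun v hv => ?_, ?_⟩
  · have := h2 v hv
    have := decr_le U f v
    by_cases hu : v ∈ U
    · rcases hk with hk | ⟨hk, hk'⟩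
      · omega
      · have := hk' v hv hu; omega
    · rw [decr_not hu]; omega
  · have := sum_decr U X f
    omega

theorem COK.next {k N m k' N' m' : ℕ} {f : V → ℕ} {U X : Finset V} (h : COK k N m f X)
    (hk : k' + 1 ≤ k ∨ (k' ≤ k ∧ ∀ v ∈ X, v ∈ U → k + 1 ≤ f v))
    (hp : N' + 2 ≤ N ∨
      (N' + 1 ≤ N ∧ ∀ u ∈ X, ∀ v ∈ X, u ≠ v → u ∈ U → v ∈ U → N ≤ f u + f v))
    (hN : N' + m' + (X ∩ U).card ≤ N + m) : COK k' N' m' (decr U f) X := by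
  obtain ⟨h1, h2, h3, h4⟩ := h
  refine ⟨h1, fun v hv => ?_, fun u hu v hv huv => ?_, ?_⟩
  · have := h2 v hv
    have := decr_le U f v
    by_cases hu : v ∈ U
    · rcases hk with hk | ⟨hk, hk'⟩
      · omega
      · have := hk' v hv hu; omega
    · rw [decr_not hu]; omega
  · have := h3 u hu v hv huv
    have := decr_le U f v
    have := decr_le U f u
    rcases hp with hp | ⟨hp, hp'⟩
    · omega
    by_cases hu' : u ∈ U
    · by_cases hv' : v ∈ U
      · have := hp' u hu v hv huv hu' hv'
        omega
      · rw [decr_not hv'] at *; omega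
    · rw [decr_not hu'] at *; omega
  · have := sum_decr U X f
    omega

theorem inter_lt {U X : Finset V} (h : ¬ X ⊆ U) : (X ∩ U).card < X.card := by
  apply Finset.card_lt_card
  rw [Finset.ssubset_iff_subset_ne]
  exact ⟨Finset.inter_subset_left, fun e => h (Finset.inter_eq_left.1 e)⟩

theorem eq_three {X : Finset V} (h : X.card = 3) {u v w : V} (hu : u ∈ X) (hv : v ∈ X)
    (hw : w ∈ X) (h1 : u ≠ v) (h2 : u ≠ w) (h3 : v ≠ w) :
    X \ {u, v} = {w} ∧ ∀ f : V → ℕ, ∑ x ∈ X, f x = f u + f v + f w := by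
  have : X = {u, v, w} := by
    symm
    apply Finset.eq_of_subset_of_card_le
    · intro x; simp; rintro (rfl | rfl | rfl) <;> assumption
    · rw [h, Finset.card_eq_three.2 ⟨u, v, w, h1, h2, h3, rfl⟩]
  subst this
  constructor
  · ext x; simp; grind
  · intro f
    rw [Finset.sum_insert (by simp [h1, h2]), Finset.sum_insert (by simp [h3])]
    simp; omega

theorem eq_two {X : Finset V} (h : X.card = 2) {u v : V} (hu : u ∈ X) (hv : v ∈ X)
    (h1 : u ≠ v) : X \ {u} = {v} ∧ ∀ f : V → ℕ, ∑ x ∈ X, f x = f u + f v := by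
  have : X = {u, v} := by
    symm
    apply Finset.eq_of_subset_of_card_le
    · intro x; simp; rintro (rfl | rfl) <;> assumption
    · rw [h, Finset.card_pair h1]
  subst this
  constructor
  · ext x; simp; grind
  · intro f
    rw [Finset.sum_pair h1]

theorem main_step {G : SimpleGraph V} {A B C S : List (Finset V)} {T U : Finset V} {f : V → ℕ}
    (hS : Str G (A ++ B ++ C ++ S) T) (hI : GInv A B C S f) (hUT : U ⊆ T) (hU : U.Nonempty) :
    ∃ I ⊆ U, I.Nonempty ∧ ∃ A' B' C' S' : List (Finset V),
      ((∀ u ∈ I, ∀ v ∈ I, ¬ G.Adj u v) ∧ Str G (A' ++ B' ++ C' ++ S') (T \ I)) ∧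
      GInv A' B' C' S' (decr U f) := by
  obtain ⟨iA, iB, iC, iS⟩ := hI
  have eC : ∀ X ∈ C, (C.erase X).length + 1 = C.length := fun X hX => by
    rw [List.length_erase_of_mem hX]
    have := List.length_pos_of_mem hX
    omega
  have eB : ∀ X ∈ B, (B.erase X).length + 1 = B.length := fun X hX => by
    rw [List.length_erase_of_mem hX]
    have := List.length_pos_of_mem hX
    omega
  have pC : ∀ X ∈ C, ∀ Z, C.count Z = (X :: C.erase X).count Z := fun X hX =>
    List.perm_iff_count.1 (List.perm_cons_erase hX)
  have pB : ∀ X ∈ B, ∀ Z, B.count Z = (X :: B.erase X).count Z := fun X hX =>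
    List.perm_iff_count.1 (List.perm_cons_erase hX)
  have cB : ∀ X ∈ B, (X ∩ U).card ≤ 2 := fun X hX => by
    rw [← (iB X hX).1]; exact Finset.card_le_card Finset.inter_subset_left
  have cC : ∀ X ∈ C, (X ∩ U).card ≤ 3 := fun X hX => by
    rw [← (iC X hX).1]; exact Finset.card_le_card Finset.inter_subset_left
  -- a whole triple
  by_cases r1 : ∃ X ∈ C, X ⊆ U
  · obtain ⟨X, hX, hXU⟩ := r1
    have e := eC X hX
    refine ⟨X, hXU, Finset.card_pos.1 (by rw [(iC X hX).1]; omega), A, B, C.erase X, S,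
      hS.mk0 ?_, iA.mono ?_, fun Y hY => (iB Y hY).next ?_ ?_,
      fun Y hY => (iC Y (List.mem_of_mem_erase hY)).next ?_ ?_ ?_, iS.mono ?_⟩
    · rw [List.perm_iff_count]; intro Z; have := pC X hX Z
      simp only [List.count_append, List.count_cons] at *; omega
    · omega
    · left; omega
    · have := cB Y hY; unfold tot; omega
    · left; omega
    · left; unfold tot; omega
    · have := cC Y (List.mem_of_mem_erase hY); unfold tot; omega
    · omega
  push Not at r1
  replace cC : ∀ X ∈ C, (X ∩ U).card ≤ 2 := fun X hX => by
    have := inter_lt (r1 X hX); have := (iC X hX).1; omega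
  -- a whole pair
  by_cases r2 : ∃ X ∈ B, X ⊆ U
  · obtain ⟨X, hX, hXU⟩ := r2
    have e := eB X hX
    refine ⟨X, hXU, Finset.card_pos.1 (by rw [(iB X hX).1]; omega), A, B.erase X, C, S,
      hS.mk0 ?_, iA.mono ?_, fun Y hY => (iB Y (List.mem_of_mem_erase hY)).next ?_ ?_,
      fun Y hY => (iC Y hY).next ?_ ?_ ?_, iS.mono ?_⟩
    · rw [List.perm_iff_count]; intro Z; have := pB X hX Z
      simp only [List.count_append, List.count_cons] at *; omega
    · omega
    · left; omega
    · have := cB Y (List.mem_of_mem_erase hY); unfold tot; omega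
    · left; omega
    · left; unfold tot; omega
    · have := cC Y hY; unfold tot; omega
    · omega
  push Not at r2
  replace cB : ∀ X ∈ B, (X ∩ U).card ≤ 1 := fun X hX => by
    have := inter_lt (r2 X hX); have := (iB X hX).1; omega
  -- a tight pair inside a triple
  by_cases r3 : ∃ X ∈ C, ∃ u ∈ X, ∃ v ∈ X, u ≠ v ∧ u ∈ U ∧ v ∈ U ∧ f u + f v < tot A B C S
  · obtain ⟨X, hX, u, hu, v, hv, huv, huU, hvU, ht⟩ := r3
    obtain ⟨w, hw, hwU⟩ := Finset.not_subset.1 (r1 X hX)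
    obtain ⟨h1, h2⟩ := eq_three (iC X hX).1 hu hv hw huv
      (fun h => hwU (h ▸ huU)) (fun h => hwU (h ▸ hvU))
    have e := eC X hX
    have hsum := (iC X hX).2.2.2
    rw [h2] at hsum
    refine ⟨{u, v}, by simp [Finset.insert_subset_iff, huU, hvU], by simp,
      A ++ [{w}], B, C.erase X, S,
      hS.mk1 (X := X) (L₀ := A ++ B ++ C.erase X ++ S) ?_
        (by simp [Finset.insert_subset_iff, hu, hv]) h1 ?_,
      (iA.mono (by omega)).snoc ?_, fun Y hY => (iB Y hY).next ?_ ?_,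
      fun Y hY => (iC Y (List.mem_of_mem_erase hY)).next ?_ ?_ ?_, iS.mono ?_⟩
    · rw [List.perm_iff_count]; intro Z; have := pC X hX Z
      simp only [List.count_append, List.count_cons] at *; omega
    · rw [List.perm_iff_count]; intro Z
      simp only [List.count_append, List.count_cons, List.count_nil] at *; omega
    · intro x hx
      rw [Finset.mem_singleton] at hx
      subst hx
      rw [decr_not hwU]; omega
    · left; omega
    · have := cB Y hY
      simp only [tot, sz_append, sz_cons, sz_nil, Finset.card_singleton] at *; omega
    · left; omega
    · left; simp only [tot, sz_append, sz_cons, sz_nil, Finset.card_singleton] at *; omega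
    · have := cC Y (List.mem_of_mem_erase hY)
      simp only [tot, sz_append, sz_cons, sz_nil, Finset.card_singleton] at *; omega
    · simp only [tot, sz_append, sz_cons, sz_nil, Finset.card_singleton] at *; omega
  push Not at r3
  -- a tight vertex in a pair
  by_cases r4 : ∃ X ∈ B, ∃ v ∈ X, v ∈ U ∧ f v ≤ C.length + B.length
  · obtain ⟨X, hX, v, hv, hvU, ht⟩ := r4
    obtain ⟨w, hw, hwU⟩ := Finset.not_subset.1 (r2 X hX)
    obtain ⟨h1, h2⟩ := eq_two (iB X hX).1 hv hw (fun h => hwU (h ▸ hvU))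
    have e := eB X hX
    have hsum := (iB X hX).2.2
    rw [h2] at hsum
    refine ⟨{v}, by simp [hvU], by simp, A, B.erase X, C, S ++ [{w}],
      hS.mk1 (X := X) (L₀ := A ++ B.erase X ++ C ++ S) ?_ (by simp [hv]) h1 ?_,
      iA.mono ?_, fun Y hY => (iB Y (List.mem_of_mem_erase hY)).next ?_ ?_,
      fun Y hY => (iC Y hY).next ?_ ?_ ?_, (iS.mono (by omega)).snoc ?_⟩
    · rw [List.perm_iff_count]; intro Z; have := pB X hX Z
      simp only [List.count_append, List.count_cons] at *; omega
    · rw [List.perm_iff_count]; intro Z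
      simp only [List.count_append, List.count_cons, List.count_nil] at *; omega
    · omega
    · left; omega
    · have := cB Y (List.mem_of_mem_erase hY)
      simp only [tot, sz_append, sz_cons, sz_nil, Finset.card_singleton] at *; omega
    · left; omega
    · right
      refine ⟨?_, r3 Y hY⟩
      simp only [tot, sz_append, sz_cons, sz_nil, Finset.card_singleton] at *; omega
    · have := cC Y hY
      simp only [tot, sz_append, sz_cons, sz_nil, Finset.card_singleton] at *; omega
    · intro x hx
      rw [Finset.mem_singleton] at hx
      subst hx
      rw [decr_not hwU]; unfold tot at hsum; omega
  push Not at r4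
  -- a tight vertex in a triple
  by_cases r5 : ∃ X ∈ C, ∃ v ∈ X, v ∈ U ∧ f v ≤ C.length + B.length
  · obtain ⟨X, hX, v, hv, hvU, ht⟩ := r5
    have e := eC X hX
    have h3 := (iC X hX).2.2.1
    have hc : (X \ {v}).card = 2 := by
      rw [Finset.card_sdiff_of_subset (by simp [hv]), (iC X hX).1]; simp
    refine ⟨{v}, by simp [hvU], by simp, A, B, C.erase X, S ++ [X \ {v}],
      hS.mk1 (X := X) (L₀ := A ++ B ++ C.erase X ++ S) ?_ (by simp [hv]) rfl ?_,
      iA.mono ?_, fun Y hY => (iB Y hY).next ?_ ?_,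
      fun Y hY => (iC Y (List.mem_of_mem_erase hY)).next ?_ ?_ ?_,
      (iS.mono (by omega)).snoc ?_⟩
    · rw [List.perm_iff_count]; intro Z; have := pC X hX Z
      simp only [List.count_append, List.count_cons] at *; omega
    · rw [List.perm_iff_count]; intro Z
      simp only [List.count_append, List.count_cons, List.count_nil] at *; omega
    · omega
    · left; omega
    · have := cB Y hY
      simp only [tot, sz_append, sz_cons, sz_nil, hc] at *; omega
    · left; omega
    · right
      refine ⟨?_, r3 Y (List.mem_of_mem_erase hY)⟩
      simp only [tot, sz_append, sz_cons, sz_nil, hc] at *; omega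
    · have := cC Y (List.mem_of_mem_erase hY)
      simp only [tot, sz_append, sz_cons, sz_nil, hc] at *; omega
    · intro x hx
      rw [Finset.mem_sdiff, Finset.mem_singleton] at hx
      have h4 := h3 x hx.1 v hv hx.2
      by_cases hxU : x ∈ U
      · have h5 := r3 X hX x hx.1 v hv hx.2 hxU hvU
        rw [decr_mem hxU]; unfold tot at *; omega
      · rw [decr_not hxU]; unfold tot at *; omega
  push Not at r5
  -- the first part of `A` that is hit
  by_cases r6 : ∃ X ∈ A, ∃ v ∈ X, v ∈ U
  · obtain ⟨l₁, X, l₂, rfl, hX, hok⟩ := iA.hit r6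
    have hc := Finset.card_sdiff_add_card_inter X U
    have hp := hX.card_pos
    refine ⟨X ∩ U, Finset.inter_subset_right, hX, l₁ ++ (X \ U) :: l₂, B, C, S,
      hS.mk1 (X := X) (L₀ := l₁ ++ l₂ ++ B ++ C ++ S) ?_ Finset.inter_subset_left
        (Finset.sdiff_inter_self_left X U) ?_,
      hok _ le_rfl, fun Y hY => (iB Y hY).next (Or.inr ⟨le_rfl, r4 Y hY⟩) ?_,
      fun Y hY => (iC Y hY).next (Or.inr ⟨le_rfl, r5 Y hY⟩) (Or.inr ⟨?_, r3 Y hY⟩) ?_,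
      iS.mono ?_⟩
    · rw [List.perm_iff_count]; intro Z
      simp only [List.count_append, List.count_cons] at *; omega
    · rw [List.perm_iff_count]; intro Z
      simp only [List.count_append, List.count_cons] at *; omega
    · have := cB Y hY
      simp only [tot, sz_append, sz_cons] at *; omega
    · simp only [tot, sz_append, sz_cons] at *; omega
    · have := cC Y hY
      simp only [tot, sz_append, sz_cons] at *; omega
    · simp only [tot, sz_append, sz_cons] at *; omega
  push Not at r6
  -- two vertices of a triple
  by_cases r7 : ∃ X ∈ C, ∃ u ∈ X, ∃ v ∈ X, u ≠ v ∧ u ∈ U ∧ v ∈ U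
  · obtain ⟨X, hX, u, hu, v, hv, huv, huU, hvU⟩ := r7
    obtain ⟨w, hw, hwU⟩ := Finset.not_subset.1 (r1 X hX)
    obtain ⟨h1, h2⟩ := eq_three (iC X hX).1 hu hv hw huv
      (fun h => hwU (h ▸ huU)) (fun h => hwU (h ▸ hvU))
    have e := eC X hX
    have hfw := (iC X hX).2.1 w hw
    refine ⟨{u, v}, by simp [Finset.insert_subset_iff, huU, hvU], by simp,
      {w} :: A, B, C.erase X, S,
      hS.mk1 (X := X) (L₀ := A ++ B ++ C.erase X ++ S) ?_
        (by simp [Finset.insert_subset_iff, hu, hv]) h1 ?_,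
      ⟨?_, iA.mono' (by rw [Finset.card_singleton]; omega) r6⟩,
      fun Y hY => (iB Y hY).next ?_ ?_,
      fun Y hY => (iC Y (List.mem_of_mem_erase hY)).next ?_ ?_ ?_, iS.mono ?_⟩
    · rw [List.perm_iff_count]; intro Z; have := pC X hX Z
      simp only [List.count_append, List.count_cons] at *; omega
    · rw [List.perm_iff_count]; intro Z
      simp only [List.count_append, List.count_cons, List.count_nil] at *; omega
    · intro x hx
      rw [Finset.mem_singleton] at hx
      subst hx
      rw [decr_not hwU]; omega
    · left; omega
    · have := cB Y hY
      simp only [tot, sz_append, sz_cons, sz_nil, Finset.card_singleton] at *; omega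
    · left; omega
    · left; simp only [tot, sz_append, sz_cons, sz_nil, Finset.card_singleton] at *; omega
    · have := cC Y (List.mem_of_mem_erase hY)
      simp only [tot, sz_append, sz_cons, sz_nil, Finset.card_singleton] at *; omega
    · simp only [tot, sz_append, sz_cons, sz_nil, Finset.card_singleton] at *; omega
  push Not at r7
  replace cC : ∀ X ∈ C, (X ∩ U).card ≤ 1 := fun X hX => by
    rw [Finset.card_le_one]
    intro a ha b hb
    rw [Finset.mem_inter] at ha hb
    by_contra hab
    exact r7 X hX a ha.1 b hb.1 hab ha.2 hb.2
  -- one vertex of a triple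
  by_cases r8 : ∃ X ∈ C, ∃ v ∈ X, v ∈ U
  · obtain ⟨X, hX, v, hv, hvU⟩ := r8
    have e := eC X hX
    obtain ⟨-, h2, h3, -⟩ := iC X hX
    have hc : (X \ {v}).card = 2 := by
      rw [Finset.card_sdiff_of_subset (by simp [hv]), (iC X hX).1]; simp
    have hnot : ∀ x ∈ X, x ≠ v → x ∉ U := fun x hx hxv hxU => r7 X hX x hx v hv hxv hxU hvU
    refine ⟨{v}, by simp [hvU], by simp, A, (X \ {v}) :: B, C.erase X, S,
      hS.mk1 (X := X) (L₀ := A ++ B ++ C.erase X ++ S) ?_ (by simp [hv]) rfl ?_,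
      iA.mono' ?_ r6, fun Y hY => ?_,
      fun Y hY => (iC Y (List.mem_of_mem_erase hY)).next
        (Or.inr ⟨?_, r5 Y (List.mem_of_mem_erase hY)⟩)
        (Or.inr ⟨?_, r3 Y (List.mem_of_mem_erase hY)⟩) ?_, iS.mono ?_⟩
    · rw [List.perm_iff_count]; intro Z; have := pC X hX Z
      simp only [List.count_append, List.count_cons] at *; omega
    · rw [List.perm_iff_count]; intro Z
      simp only [List.count_append, List.count_cons, List.count_nil] at *; omega
    · simp only [List.length_cons]; omega
    · rcases List.mem_cons.1 hY with rfl | hY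
      · refine ⟨hc, fun x hx => ?_, ?_⟩
        · rw [Finset.mem_sdiff, Finset.mem_singleton] at hx
          rw [decr_not (hnot x hx.1 hx.2)]
          have := h2 x hx.1
          simp only [List.length_cons]; omega
        · obtain ⟨a, b, hab, hE⟩ := Finset.card_eq_two.1 hc
          have ha : a ∈ X \ {v} := by rw [hE]; simp
          have hb : b ∈ X \ {v} := by rw [hE]; simp
          rw [hE, Finset.sum_pair hab]
          rw [Finset.mem_sdiff, Finset.mem_singleton] at ha hb
          rw [decr_not (hnot a ha.1 ha.2), decr_not (hnot b hb.1 hb.2)]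
          have := h3 a ha.1 b hb.1 hab
          simp only [tot, List.length_cons] at *; omega
      · have := cB Y hY
        refine (iB Y hY).next (Or.inr ⟨?_, r4 Y hY⟩) ?_
        · simp only [List.length_cons]; omega
        · simp only [tot, List.length_cons]; omega
    · simp only [List.length_cons]; omega
    · simp only [tot, List.length_cons]; omega
    · have := cC Y (List.mem_of_mem_erase hY)
      simp only [tot, List.length_cons]; omega
    · simp only [List.length_cons]; omega
  push Not at r8
  replace cC : ∀ X ∈ C, (X ∩ U).card = 0 := fun X hX => by
    rw [Finset.card_eq_zero, Finset.eq_empty_iff_forall_notMem]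
    intro v hv
    rw [Finset.mem_inter] at hv
    exact r8 X hX v hv.1 hv.2
  -- the first part of `S` that is hit
  by_cases r9 : ∃ X ∈ S, ∃ v ∈ X, v ∈ U
  · obtain ⟨l₁, X, l₂, rfl, hX, hok⟩ := iS.hit r9
    have hc := Finset.card_sdiff_add_card_inter X U
    have hp := hX.card_pos
    refine ⟨X ∩ U, Finset.inter_subset_right, hX, A, B, C, l₁ ++ (X \ U) :: l₂,
      hS.mk1 (X := X) (L₀ := A ++ B ++ C ++ l₁ ++ l₂) ?_ Finset.inter_subset_left
        (Finset.sdiff_inter_self_left X U) ?_,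
      iA.mono' le_rfl r6, fun Y hY => (iB Y hY).next (Or.inr ⟨le_rfl, r4 Y hY⟩) ?_,
      fun Y hY => (iC Y hY).next (Or.inr ⟨le_rfl, r5 Y hY⟩) (Or.inr ⟨?_, r3 Y hY⟩) ?_,
      hok _ le_rfl⟩
    · rw [List.perm_iff_count]; intro Z
      simp only [List.count_append, List.count_cons] at *; omega
    · rw [List.perm_iff_count]; intro Z
      simp only [List.count_append, List.count_cons] at *; omega
    · have := cB Y hY
      simp only [tot, sz_append, sz_cons] at *; omega
    · simp only [tot, sz_append, sz_cons] at *; omega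
    · have := cC Y hY
      simp only [tot, sz_append, sz_cons] at *; omega
  push Not at r9
  -- one vertex of a pair
  by_cases r10 : ∃ X ∈ B, ∃ v ∈ X, v ∈ U
  · obtain ⟨X, hX, v, hv, hvU⟩ := r10
    obtain ⟨w, hw, hwU⟩ := Finset.not_subset.1 (r2 X hX)
    obtain ⟨h1, h2⟩ := eq_two (iB X hX).1 hv hw (fun h => hwU (h ▸ hvU))
    have e := eB X hX
    have hfw := (iB X hX).2.1 w hw
    refine ⟨{v}, by simp [hvU], by simp, {w} :: A, B.erase X, C, S,
      hS.mk1 (X := X) (L₀ := A ++ B.erase X ++ C ++ S) ?_ (by simp [hv]) h1 ?_,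
      ⟨?_, iA.mono' (by rw [Finset.card_singleton]; omega) r6⟩,
      fun Y hY => (iB Y (List.mem_of_mem_erase hY)).next ?_ ?_,
      fun Y hY => (iC Y hY).next ?_ (Or.inr ⟨?_, r3 Y hY⟩) ?_, iS.mono' ?_ r9⟩
    · rw [List.perm_iff_count]; intro Z; have := pB X hX Z
      simp only [List.count_append, List.count_cons] at *; omega
    · rw [List.perm_iff_count]; intro Z
      simp only [List.count_append, List.count_cons, List.count_nil] at *; omega
    · intro x hx
      rw [Finset.mem_singleton] at hx
      subst hx
      rw [decr_not hwU]; omega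
    · left; omega
    · have := cB Y (List.mem_of_mem_erase hY)
      simp only [tot, sz_cons, Finset.card_singleton]; omega
    · left; omega
    · simp only [tot, sz_cons, Finset.card_singleton]; omega
    · have := cC Y hY
      simp only [tot, sz_cons, Finset.card_singleton]; omega
    · simp only [sz_cons, Finset.card_singleton]; omega
  push Not at r10
  exfalso
  obtain ⟨v, hv⟩ := hU
  obtain ⟨X, hX, hvX⟩ := (hS.1 v).1 (hUT hv)
  simp only [List.mem_append] at hX
  rcases hX with ((hX | hX) | hX) | hX
  · exact r6 X hX v hvX hv
  · exact r10 X hX v hvX hv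
  · exact r8 X hX v hvX hv
  · exact r9 X hX v hvX hv

theorem main_lemma {G : SimpleGraph V} (n : ℕ) :
    ∀ {A B C S : List (Finset V)} {T : Finset V} {f : V → ℕ}, T.card < n →
      Str G (A ++ B ++ C ++ S) T → GInv A B C S f → OnlineChoosableAux G n T f := by
  induction n with
  | zero => intro A B C S T f h; omega
  | succ n ih =>
    intro A B C S T f hn hS hI
    by_cases hE : ∃ u ∈ T, ∃ v ∈ T, G.Adj u v
    · right
      refine ⟨hE, fun U hUT hU => ?_⟩
      obtain ⟨I, hIU, hne, A', B', C', S', ⟨hind, hS'⟩, hI'⟩ := main_step hS hI hUT hU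
      refine ⟨I, hIU, hind, ih ?_ hS' hI'⟩
      have := Finset.card_sdiff_of_subset (hIU.trans hUT)
      have := hne.card_pos
      have := Finset.card_le_card (hIU.trans hUT)
      omega
    · left
      push Not at hE
      refine ⟨hE, fun v hv => ?_⟩
      obtain ⟨X, hX, hvX⟩ := (hS.1 v).1 hv
      simp only [List.mem_append] at hX
      obtain ⟨iA, iB, iC, iS⟩ := hI
      rcases hX with ((hX | hX) | hX) | hX
      · exact iA.pos X hX v hvX
      · have := (iB X hX).2.1 v hvX
        have := List.length_pos_of_mem hX
        omega
      · have := (iC X hX).2.1 v hvX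
        have := List.length_pos_of_mem hX
        omega
      · exact iS.pos X hX v hvX

open Finset in
/-- For a complete multipartite graph `G` with `k₁` parts of size 1, `k₂` parts of size 2
and `k₃` parts of size 3 (parts are the fibres of `P`), if `|V(G)| ≤ 2χ(G)` where
`χ(G) = k₁ + k₂ + k₃`, then the constant function `f ≡ χ(G)` satisfies all hypotheses of
the technical lemma with `𝒮 = ∅` (for any ordering of the parts of size 1), and
consequently `G` is on-line `χ(G)`-choosable. -/
theorem const_chromatic_satisfies_technical_conditions
    (k₁ k₂ k₃ : ℕ)
    (P : V → Fin k₁ ⊕ Fin k₂ ⊕ Fin k₃)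
    (G : SimpleGraph V)
    (hAdj : ∀ u v, G.Adj u v ↔ P u ≠ P v)
    (hA : ∀ i : Fin k₁, (univ.filter fun v => P v = Sum.inl i).card = 1)
    (hB : ∀ i : Fin k₂, (univ.filter fun v => P v = Sum.inr (Sum.inl i)).card = 2)
    (hC : ∀ i : Fin k₃, (univ.filter fun v => P v = Sum.inr (Sum.inr i)).card = 3)
    (hcard : Fintype.card V ≤ 2 * (k₁ + k₂ + k₃))
    (f : V → ℕ) (hf : ∀ v, f v = k₁ + k₂ + k₃) :
    (∀ i : Fin k₁, ∀ v, P v = Sum.inl i → k₃ + k₂ + ((i : ℕ) + 1) ≤ f v) ∧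
    (∀ i : Fin k₂, ∀ v, P v = Sum.inr (Sum.inl i) → k₃ + k₂ ≤ f v) ∧
    (∀ i : Fin k₂,
      Fintype.card V ≤ ∑ v ∈ univ.filter (fun v => P v = Sum.inr (Sum.inl i)), f v) ∧
    (∀ i : Fin k₃, ∀ v, P v = Sum.inr (Sum.inr i) → k₃ + k₂ ≤ f v) ∧
    (∀ i : Fin k₃, ∀ u v, P u = Sum.inr (Sum.inr i) → P v = Sum.inr (Sum.inr i) →
      u ≠ v → Fintype.card V - 1 ≤ f u + f v) ∧
    (∀ i : Fin k₃,
      Fintype.card V - 1 + k₃ + k₂ + k₁ ≤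
        ∑ v ∈ univ.filter (fun v => P v = Sum.inr (Sum.inr i)), f v) ∧
    OnlineChoosable G Finset.univ f := by
  have key : OnlineChoosable G Finset.univ f := by
    have hcV : Fintype.card V = k₁ + 2 * k₂ + 3 * k₃ := by
      have h := Finset.card_eq_sum_card_fiberwise (f := P) (s := (univ : Finset V))
        (t := univ) (fun _ _ => by simp)
      rw [Finset.card_univ, Fintype.sum_sum_type, Fintype.sum_sum_type] at h
      simp only [hA, hB, hC, Finset.sum_const, Finset.card_univ, Fintype.card_fin,
        smul_eq_mul] at h
      omega
    let F : Fin k₁ ⊕ Fin k₂ ⊕ Fin k₃ → Finset V := fun p => univ.filter fun v => P v = p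
    let LA := (List.finRange k₁).map fun i => F (Sum.inl i)
    let LB := (List.finRange k₂).map fun i => F (Sum.inr (Sum.inl i))
    let LC := (List.finRange k₃).map fun i => F (Sum.inr (Sum.inr i))
    have lA : LA.length = k₁ := by simp [LA]
    have lB : LB.length = k₂ := by simp [LB]
    have lC : LC.length = k₃ := by simp [LC]
    have cA : ∀ X ∈ LA, X.card = 1 := by
      intro X hX
      obtain ⟨i, -, rfl⟩ := List.mem_map.1 hX
      exact hA i
    have cB : ∀ X ∈ LB, X.card = 2 := by
      intro X hX
      obtain ⟨i, -, rfl⟩ := List.mem_map.1 hX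
      exact hB i
    have cC : ∀ X ∈ LC, X.card = 3 := by
      intro X hX
      obtain ⟨i, -, rfl⟩ := List.mem_map.1 hX
      exact hC i
    have sA : sz LA = k₁ := by
      have : LA.map Finset.card = List.replicate k₁ 1 := by
        rw [List.eq_replicate_iff]
        refine ⟨by simp [lA], fun b hb => ?_⟩
        obtain ⟨X, hX, rfl⟩ := List.mem_map.1 hb
        exact cA X hX
      rw [sz, this]; simp
    have hsum : ∀ X : Finset V, ∑ v ∈ X, f v = X.card * (k₁ + k₂ + k₃) := by
      intro X; simp [hf]
    have hN : tot LA LB LC [] = Fintype.card V := by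
      rw [hcV, tot, lB, lC, sA, sz_nil]; omega
    refine ⟨_, main_lemma (Finset.univ.card + 1) (A := LA) (B := LB) (C := LC) (S := [])
      (by omega) ⟨?_, ?_, ?_⟩ ⟨?_, ?_, ?_, trivial⟩⟩
    · intro v
      simp only [Finset.mem_univ, true_iff]
      refine ⟨F (P v), ?_, by simp [F]⟩
      rcases P v with i | i | i <;> simp only [List.mem_append, LA, LB, LC, List.mem_map,
        List.mem_finRange, true_and]
      · exact Or.inl (Or.inl (Or.inl ⟨i, rfl⟩))
      · exact Or.inl (Or.inl (Or.inr ⟨i, rfl⟩))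
      · exact Or.inl (Or.inr ⟨i, rfl⟩)
    · have e : LA ++ LB ++ LC ++ [] = ((List.finRange k₁).map Sum.inl ++
          (List.finRange k₂).map (Sum.inr ∘ Sum.inl) ++
          (List.finRange k₃).map (Sum.inr ∘ Sum.inr)).map F := by
        simp [LA, LB, LC, Function.comp_def]
      rw [e, List.pairwise_map]
      have nd : ((List.finRange k₁).map (Sum.inl : Fin k₁ → Fin k₁ ⊕ Fin k₂ ⊕ Fin k₃) ++
          (List.finRange k₂).map (Sum.inr ∘ Sum.inl) ++
          (List.finRange k₃).map (Sum.inr ∘ Sum.inr)).Nodup := by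
        rw [List.nodup_append', List.nodup_append']
        refine ⟨⟨(List.nodup_finRange _).map Sum.inl_injective,
          (List.nodup_finRange _).map (Sum.inr_injective.comp Sum.inl_injective), ?_⟩,
          (List.nodup_finRange _).map (Sum.inr_injective.comp Sum.inr_injective), ?_⟩
        · intro p; simp; grind
        · intro p; simp; grind
      refine List.Pairwise.imp ?_ nd
      intro p q hpq x hx y hy
      simp only [F, Finset.mem_filter, Finset.mem_univ, true_and] at hx hy
      rw [hAdj, hx, hy]
      exact hpq
    · intro X hX
      have : ∃ p, F p = X := by
        simp only [List.append_nil, List.mem_append, LA, LB, LC, List.mem_map] at hX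
        rcases hX with (⟨i, -, h⟩ | ⟨i, -, h⟩) | ⟨i, -, h⟩ <;> exact ⟨_, h⟩
      obtain ⟨p, rfl⟩ := this
      intro x hx y hy
      simp only [F, Finset.mem_filter, Finset.mem_univ, true_and] at hx hy
      rw [hAdj, hx, hy]
      simp
    · apply OK.const cA
      intro v; rw [hf, lA, lB, lC]; omega
    · intro X hX
      refine ⟨cB X hX, fun v _ => ?_, ?_⟩
      · rw [hf, lB, lC]; omega
      · rw [hsum, cB X hX, hN]; exact hcard
    · intro X hX
      refine ⟨cC X hX, fun v _ => ?_, fun u _ v _ _ => ?_, ?_⟩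
      · rw [hf, lB, lC]; omega
      · rw [hf, hf, hN]; omega
      · rw [hsum, cC X hX, hN, lB, lC, sA]; omega
  refine ⟨fun i v _ => ?_, fun i v _ => ?_, fun i => ?_, fun i v _ => ?_,
    fun i u v _ _ _ => ?_, fun i => ?_, key⟩
  · rw [hf]; omega
  · rw [hf]; omega
  · simp only [hf, Finset.sum_const, hB, smul_eq_mul]; omega
  · rw [hf]; omega
  · rw [hf, hf]; omega
  · simp only [hf, Finset.sum_const, hC, smul_eq_mul]; omega
end

section
/- If G is a finite simple graph in which every independent set has size at most 3 and |V(G)| ≤ 2χ(G), then G is on-line χ(G)-choosable (hence ch^OL(G) = χ(G)); moreover it suffices to prove this when G is a complete multipartite graph with all parts of size at most 3, since every graph with independence number at most 3 is a spanning subgraph of such a complete multipartite graph with the same chromatic number bound. -/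
variable {V : Type} [Fintype V] [DecidableEq V]

/-- The on-line choice number: least `k` such that `G` is on-line `k`-choosable. -/
noncomputable def onlineChoiceNumber (G : SimpleGraph V) : ℕ :=
  sInf {k | OnlineChoosable G Finset.univ (fun _ => k)}

/-- The chromatic number of `G` as a natural number. -/
noncomputable def chromNum (G : SimpleGraph V) : ℕ := sInf {n | G.Colorable n}


namespace OnOhba

set_option linter.unusedSectionVars false
set_option linter.unusedSimpArgs false

/-- Token function after the set `U` has been presented. -/
def dr (f : V → ℕ) (U : Finset V) : V → ℕ := fun v => f v - if v ∈ U then 1 else 0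

def GoodA (f : V → ℕ) : ℕ → List V → Prop
  | _, [] => True
  | m, a :: A => m + 1 ≤ f a ∧ GoodA f (m + 1) A

def GoodL (f : V → ℕ) : ℕ → List (Finset V) → Prop
  | _, [] => True
  | m, P :: L => (∀ v ∈ P, m ≤ f v) ∧ GoodL f (m + P.card) L

def sig : List (Finset V) → ℕ
  | [] => 0
  | P :: L => P.card + sig L

def Ind (G : SimpleGraph V) (P : Finset V) : Prop := ∀ u ∈ P, ∀ v ∈ P, ¬ G.Adj u v

def GB (G : SimpleGraph V) (f : V → ℕ) (m n : ℕ) (p : V × V) : Prop :=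
  ¬ G.Adj p.1 p.2 ∧ m ≤ f p.1 ∧ m ≤ f p.2 ∧ n ≤ f p.1 + f p.2

def GC (G : SimpleGraph V) (f : V → ℕ) (m n s : ℕ) (p : V × V × V) : Prop :=
  (¬ G.Adj p.1 p.2.1 ∧ ¬ G.Adj p.1 p.2.2 ∧ ¬ G.Adj p.2.1 p.2.2) ∧
  (m ≤ f p.1 ∧ m ≤ f p.2.1 ∧ m ≤ f p.2.2) ∧
  (n ≤ f p.1 + f p.2.1 + 1 ∧ n ≤ f p.1 + f p.2.2 + 1 ∧ n ≤ f p.2.1 + f p.2.2 + 1) ∧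
  n + s ≤ f p.1 + f p.2.1 + f p.2.2 + 1

/-- `x` is covered by some pair of `B`. -/
def CB (B : Multiset (V × V)) (x : V) : Prop := ∃ p ∈ B, x = p.1 ∨ x = p.2

/-- `x` is covered by some triple of `C`. -/
def CC (C : Multiset (V × V × V)) (x : V) : Prop := ∃ p ∈ C, x = p.1 ∨ x = p.2.1 ∨ x = p.2.2

/-- `x` is covered by some part in `L`. -/
def CL (L : List (Finset V)) (x : V) : Prop := ∃ P ∈ L, x ∈ P

lemma CB_cons {B : Multiset (V × V)} {u v x : V} :
    CB ((u, v) ::ₘ B) x ↔ (x = u ∨ x = v) ∨ CB B x := by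
  simp only [CB, Multiset.mem_cons, exists_eq_or_imp]

lemma CC_cons {C : Multiset (V × V × V)} {u v w x : V} :
    CC ((u, v, w) ::ₘ C) x ↔ (x = u ∨ x = v ∨ x = w) ∨ CC C x := by
  simp only [CC, Multiset.mem_cons, exists_eq_or_imp]

lemma CL_snoc {L : List (Finset V)} {W : Finset V} {x : V} :
    CL (L ++ [W]) x ↔ CL L x ∨ x ∈ W := by
  simp only [CL, List.mem_append, List.mem_singleton, or_and_right, exists_or, exists_eq_left]

structure Inv (G : SimpleGraph V) (X : Finset V) (f : V → ℕ) (A : List V)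
    (B : Multiset (V × V)) (C : Multiset (V × V × V)) (L : List (Finset V)) : Prop where
  cover : ∀ x ∈ X, x ∈ A ∨ CB B x ∨ CC C x ∨ CL L x
  hA : GoodA f (B.card + C.card) A
  hB : ∀ p ∈ B, GB G f (B.card + C.card) (A.length + 2 * B.card + 3 * C.card + sig L) p
  hC : ∀ p ∈ C, GC G f (B.card + C.card) (A.length + 2 * B.card + 3 * C.card + sig L)
    (A.length + B.card + C.card) p
  hL : GoodL f (A.length + B.card + 2 * C.card + 1) L
  hI : ∀ P ∈ L, Ind G P

def Step (G : SimpleGraph V) (X : Finset V) (f : V → ℕ) (U : Finset V) : Prop :=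
  ∃ I ⊆ U, Ind G I ∧ I.Nonempty ∧ ∃ A B C L, Inv G (X \ I) (dr f U) A B C L

lemma dr_le (f : V → ℕ) (U : Finset V) (v : V) : f v ≤ dr f U v + 1 := by
  unfold dr; split_ifs <;> omega

lemma dr_not (f : V → ℕ) (U : Finset V) (v : V) (h : v ∉ U) : dr f U v = f v := by
  simp [dr, h]

lemma GoodA.mono {f f' : V → ℕ} (d : ℕ) : ∀ {A : List V} {m m' : ℕ}, GoodA f m A →
    (∀ v ∈ A, f v ≤ f' v + d) → m' + d ≤ m → GoodA f' m' A
  | [], _, _, _, _, _ => trivial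
  | a :: A, m, m', h, h1, h2 => by
      refine ⟨?_, GoodA.mono d h.2 (fun v hv => h1 v (List.mem_cons_of_mem _ hv)) (by omega)⟩
      have := h1 a (by simp); have := h.1; omega

lemma GoodA.snoc {f : V → ℕ} {w : V} : ∀ {A : List V} {m : ℕ}, GoodA f m A →
    m + A.length + 1 ≤ f w → GoodA f m (A ++ [w])
  | [], _, _, h => ⟨by simpa using h, trivial⟩
  | a :: A, m, h, h1 => ⟨h.1, GoodA.snoc h.2 (by simp at h1; omega)⟩

lemma GoodA.pos {f : V → ℕ} : ∀ {A : List V} {m : ℕ}, GoodA f m A → ∀ v ∈ A, 1 ≤ f v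
  | [], _, _, v, hv => by simp at hv
  | a :: A, m, h, v, hv => by
      rcases List.mem_cons.1 hv with rfl | hv
      · have := h.1; omega
      · exact GoodA.pos h.2 v hv

lemma GoodA.hit {f : V → ℕ} {U : Finset V} : ∀ {A : List V} {m : ℕ}, GoodA f m A →
    (∃ a ∈ A, a ∈ U) → ∃ a ∈ U, ∃ A' : List V, GoodA (dr f U) m A' ∧ A.length = A'.length + 1 ∧
      ∀ x ∈ A, x ∈ A' ∨ x = a
  | [], _, _, h => by simp at h
  | a :: A, m, h, h1 => by
      by_cases ha : a ∈ U
      · refine ⟨a, ha, A, GoodA.mono 1 h.2 (fun v _ => dr_le f U v) le_rfl, rfl, ?_⟩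
        intro x hx; simp at hx; tauto
      · obtain ⟨b, hb, A', h2, h3, h4⟩ := GoodA.hit h.2 (U := U) (by simpa [ha] using h1)
        refine ⟨b, hb, a :: A', ⟨by rw [dr_not _ _ _ ha]; exact h.1, h2⟩, by simp [h3], ?_⟩
        intro x hx
        rcases List.mem_cons.1 hx with rfl | hx
        · simp
        · rcases h4 x hx with h | h <;> simp [h]

lemma GoodA.const {k : ℕ} : ∀ {A : List V} {m : ℕ}, m + A.length ≤ k → GoodA (fun _ => k) m A
  | [], _, _ => trivial
  | a :: A, m, h => by
      simp at h
      exact ⟨by show m + 1 ≤ k; omega, GoodA.const (by omega)⟩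

lemma GoodL.mono {f f' : V → ℕ} (d : ℕ) : ∀ {A : List (Finset V)} {m m' : ℕ}, GoodL f m A →
    (∀ P ∈ A, ∀ v ∈ P, f v ≤ f' v + d) → m' + d ≤ m → GoodL f' m' A
  | [], _, _, _, _, _ => trivial
  | a :: A, m, m', h, h1, h2 => by
      refine ⟨?_, GoodL.mono d h.2 (fun P hP => h1 P (List.mem_cons_of_mem _ hP)) (by omega)⟩
      intro v hv
      have := h1 a (by simp) v hv; have := h.1 v hv; omega

lemma GoodL.snoc {f : V → ℕ} {W : Finset V} : ∀ {A : List (Finset V)} {m : ℕ}, GoodL f m A →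
    (∀ w ∈ W, m + sig A ≤ f w) → GoodL f m (A ++ [W])
  | [], _, _, h => ⟨by simpa [sig] using h, trivial⟩
  | a :: A, m, h, h1 => ⟨h.1, GoodL.snoc h.2 (fun w hw => by
      have := h1 w hw; simp only [sig] at this; omega)⟩

lemma sig_snoc {W : Finset V} : ∀ {A : List (Finset V)}, sig (A ++ [W]) = sig A + W.card
  | [] => by simp [sig]
  | a :: A => by simp [sig, sig_snoc, add_assoc]

lemma GoodL.pos {f : V → ℕ} : ∀ {A : List (Finset V)} {m : ℕ}, GoodL f (m + 1) A →
    ∀ P ∈ A, ∀ v ∈ P, 1 ≤ f v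
  | [], _, _, v, hv => by simp at hv
  | a :: A, m, h, P, hP => by
      rcases List.mem_cons.1 hP with rfl | hP
      · intro v hv; have := h.1 v hv; omega
      · refine GoodL.pos (m := m + a.card) ?_ P hP
        have := h.2
        rwa [show m + a.card + 1 = m + 1 + a.card by omega]

lemma GoodL.hit {G : SimpleGraph V} {f : V → ℕ} {U : Finset V} :
    ∀ {A : List (Finset V)} {m : ℕ}, GoodL f m A → (∀ P ∈ A, Ind G P) →
    (∃ P ∈ A, ∃ a ∈ P, a ∈ U) → ∃ I ⊆ U, I.Nonempty ∧ Ind G I ∧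
      ∃ A' : List (Finset V), GoodL (dr f U) m A' ∧ sig A' + 1 ≤ sig A ∧ (∀ P ∈ A', Ind G P) ∧
      ∀ P ∈ A, ∀ x ∈ P, (∃ Q ∈ A', x ∈ Q) ∨ x ∈ I
  | [], _, _, _, h => by simp at h
  | a :: A, m, h, hI, h1 => by
      by_cases ha : ∃ x ∈ a, x ∈ U
      · obtain ⟨y, hy, hyU⟩ := ha
        have hc : (a \ U).card + 1 ≤ a.card := by
          apply Finset.card_lt_card
          refine ⟨Finset.sdiff_subset, fun hh => ?_⟩
          have := hh hy
          simp [hyU] at this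
        refine ⟨a ∩ U, Finset.inter_subset_right, ⟨y, by simp [hy, hyU]⟩, ?_, (a \ U) :: A,
          ⟨?_, ?_⟩, ?_, ?_, ?_⟩
        · intro u hu v hv
          simp at hu hv
          exact hI a (by simp) u hu.1 v hv.1
        · intro v hv
          simp at hv
          rw [dr_not _ _ _ hv.2]; exact h.1 v hv.1
        · exact GoodL.mono 1 h.2 (fun _ _ v _ => dr_le f U v) (by omega)
        · simp only [sig]; omega
        · intro P hP
          rcases List.mem_cons.1 hP with rfl | hP
          · intro u hu v hv
            simp at hu hv
            exact hI a (by simp) u hu.1 v hv.1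
          · exact hI P (by simp [hP])
        · intro P hP x hx
          rcases List.mem_cons.1 hP with rfl | hP
          · by_cases hxU : x ∈ U
            · right; simp [hx, hxU]
            · left; exact ⟨_, List.mem_cons_self, by simp [hx, hxU]⟩
          · left; exact ⟨P, by simp [hP], hx⟩
      · have h1' : ∃ P ∈ A, ∃ a ∈ P, a ∈ U := by
          obtain ⟨P, hP, h'⟩ := h1
          rcases List.mem_cons.1 hP with h0 | hP
          · exact absurd (h0 ▸ h') ha
          · exact ⟨P, hP, h'⟩
        obtain ⟨I, hIU, hne, hInd, A', h2, h3, h4, h5⟩ :=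
          GoodL.hit h.2 (fun P hP => hI P (by simp [hP])) h1'
        push Not at ha
        refine ⟨I, hIU, hne, hInd, a :: A', ⟨?_, h2⟩, by simp only [sig]; omega, ?_, ?_⟩
        · intro v hv
          rw [dr_not _ _ _ (ha v hv)]; exact h.1 v hv
        · intro P hP
          rcases List.mem_cons.1 hP with rfl | hP
          · exact hI P (by simp)
          · exact h4 P hP
        · intro P hP x hx
          rcases List.mem_cons.1 hP with rfl | hP
          · left; exact ⟨P, by simp, hx⟩
          · rcases h5 P hP x hx with ⟨Q, hQ, hxQ⟩ | h
            · left; exact ⟨Q, by simp [hQ], hxQ⟩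
            · exact Or.inr h

lemma Inv.pos {G : SimpleGraph V} {X : Finset V} {f : V → ℕ} {A : List V}
    {B : Multiset (V × V)} {C : Multiset (V × V × V)} {L : List (Finset V)}
    (h : Inv G X f A B C L) : ∀ x ∈ X, 1 ≤ f x := by
  intro x hx
  rcases h.cover x hx with h1 | ⟨p, hp, h1⟩ | ⟨p, hp, h1⟩ | ⟨P, hP, h1⟩
  · exact h.hA.pos x h1
  · have hc : 0 < B.card := Multiset.card_pos_iff_exists_mem.2 ⟨p, hp⟩
    obtain ⟨-, h2, h3, -⟩ := h.hB p hp
    rcases h1 with rfl | rfl <;> omega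
  · have hc : 0 < C.card := Multiset.card_pos_iff_exists_mem.2 ⟨p, hp⟩
    obtain ⟨-, ⟨h2, h3, h4⟩, -⟩ := h.hC p hp
    rcases h1 with rfl | rfl | rfl <;> omega
  · exact h.hL.pos P hP x h1

lemma norm3 (G : SimpleGraph V) (f : V → ℕ) (U : Finset V) (p : V × V × V) :
    ∃ q : V × V × V, (∀ m n s, GC G f m n s p → GC G f m n s q) ∧
      (∀ x, (x = p.1 ∨ x = p.2.1 ∨ x = p.2.2) → (x = q.1 ∨ x = q.2.1 ∨ x = q.2.2)) ∧
      (q.2.2 ∈ U → q.2.1 ∈ U) ∧ (q.2.1 ∈ U → q.1 ∈ U) ∧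
      (q.2.1 ∈ U → q.2.2 ∉ U → f q.1 ≤ f q.2.1) := by
  obtain ⟨u, v, w⟩ := p
  have key : ∀ a b c : V, (∀ m n s, GC G f m n s (u, v, w) → GC G f m n s (a, b, c)) →
      (∀ x, (x = u ∨ x = v ∨ x = w) → (x = a ∨ x = b ∨ x = c)) →
      (c ∈ U → b ∈ U) → (b ∈ U → a ∈ U) → (b ∈ U → c ∉ U → f a ≤ f b) → _ :=
    fun a b c h1 h2 h3 h4 h5 => (⟨(a, b, c), h1, h2, h3, h4, h5⟩ : ∃ q : V × V × V,
      (∀ m n s, GC G f m n s (u, v, w) → GC G f m n s q) ∧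
      (∀ x, (x = u ∨ x = v ∨ x = w) → (x = q.1 ∨ x = q.2.1 ∨ x = q.2.2)) ∧
      (q.2.2 ∈ U → q.2.1 ∈ U) ∧ (q.2.1 ∈ U → q.1 ∈ U) ∧
      (q.2.1 ∈ U → q.2.2 ∉ U → f q.1 ≤ f q.2.1))
  have k1 : ∀ m n s, GC G f m n s (u, v, w) → GC G f m n s (u, v, w) := fun m n s h => h
  have k2 : ∀ m n s, GC G f m n s (u, v, w) → GC G f m n s (u, w, v) := by
    simp only [GC, G.adj_comm w v]
    intro m n s h
    refine ⟨by tauto, by tauto, ?_, by omega⟩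
    omega
  have k3 : ∀ m n s, GC G f m n s (u, v, w) → GC G f m n s (v, u, w) := by
    simp only [GC, G.adj_comm v u]
    intro m n s h
    refine ⟨by tauto, by tauto, ?_, by omega⟩
    omega
  have k4 : ∀ m n s, GC G f m n s (u, v, w) → GC G f m n s (v, w, u) := by
    simp only [GC, G.adj_comm v u, G.adj_comm w u]
    intro m n s h
    refine ⟨by tauto, by tauto, ?_, by omega⟩
    omega
  have k5 : ∀ m n s, GC G f m n s (u, v, w) → GC G f m n s (w, u, v) := by
    simp only [GC, G.adj_comm w u, G.adj_comm w v]
    intro m n s h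
    refine ⟨by tauto, by tauto, ?_, by omega⟩
    omega
  have k6 : ∀ m n s, GC G f m n s (u, v, w) → GC G f m n s (w, v, u) := by
    simp only [GC, G.adj_comm w u, G.adj_comm w v, G.adj_comm v u]
    intro m n s h
    refine ⟨by tauto, by tauto, ?_, by omega⟩
    omega
  by_cases hu : u ∈ U <;> by_cases hv : v ∈ U <;> by_cases hw : w ∈ U
  · exact key u v w k1 (by tauto) (by tauto) (by tauto) (by tauto)
  · rcases le_total (f u) (f v) with h | h
    · exact key u v w k1 (by tauto) (by tauto) (by tauto) (by tauto)
    · exact key v u w k3 (by tauto) (by tauto) (by tauto) (by tauto)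
  · rcases le_total (f u) (f w) with h | h
    · exact key u w v k2 (by tauto) (by tauto) (by tauto) (by tauto)
    · exact key w u v k5 (by tauto) (by tauto) (by tauto) (by tauto)
  · exact key u v w k1 (by tauto) (by tauto) (by tauto) (by tauto)
  · rcases le_total (f v) (f w) with h | h
    · exact key v w u k4 (by tauto) (by tauto) (by tauto) (by tauto)
    · exact key w v u k6 (by tauto) (by tauto) (by tauto) (by tauto)
  · exact key v u w k3 (by tauto) (by tauto) (by tauto) (by tauto)
  · exact key w u v k5 (by tauto) (by tauto) (by tauto) (by tauto)
  · exact key u v w k1 (by tauto) (by tauto) (by tauto) (by tauto)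

lemma norm2 (G : SimpleGraph V) (f : V → ℕ) (U : Finset V) (p : V × V) :
    ∃ q : V × V, (∀ m n, GB G f m n p → GB G f m n q) ∧
      (∀ x, (x = p.1 ∨ x = p.2) → (x = q.1 ∨ x = q.2)) ∧ (q.2 ∈ U → q.1 ∈ U) := by
  obtain ⟨u, v⟩ := p
  by_cases hu : u ∈ U
  · exact ⟨(u, v), fun _ _ h => h, fun x h => h, fun _ => hu⟩
  · refine ⟨(v, u), ?_, fun x h => h.symm, fun h => absurd h hu⟩
    simp only [GB, G.adj_comm v u]
    intro m n h
    refine ⟨h.1, by tauto, by tauto, by omega⟩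

lemma Inv.norm {G : SimpleGraph V} {X : Finset V} {f : V → ℕ} {A : List V}
    {B : Multiset (V × V)} {C : Multiset (V × V × V)} {L : List (Finset V)}
    (h : Inv G X f A B C L) (U : Finset V) : ∃ B' C', Inv G X f A B' C' L ∧
      (∀ q ∈ B', (q.2 ∈ U → q.1 ∈ U)) ∧
      (∀ q ∈ C', (q.2.2 ∈ U → q.2.1 ∈ U) ∧ (q.2.1 ∈ U → q.1 ∈ U) ∧
      (q.2.1 ∈ U → q.2.2 ∉ U → f q.1 ≤ f q.2.1)) := by
  choose φ h1 h2 h3 using norm3 G f U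
  choose ψ g1 g2 g3 using norm2 G f U
  refine ⟨B.map ψ, C.map φ, ⟨?_, ?_, ?_, ?_, ?_, h.hI⟩, ?_, ?_⟩
  · intro x hx
    rcases h.cover x hx with h' | ⟨p, hp, h'⟩ | ⟨p, hp, h'⟩ | h'
    · exact Or.inl h'
    · exact Or.inr (Or.inl ⟨ψ p, Multiset.mem_map_of_mem _ hp, g2 p x h'⟩)
    · exact Or.inr (Or.inr (Or.inl ⟨φ p, Multiset.mem_map_of_mem _ hp, h2 p x h'⟩))
    · exact Or.inr (Or.inr (Or.inr h'))
  · simpa using h.hA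
  · simp only [Multiset.card_map, Multiset.mem_map]
    rintro q ⟨p, hp, rfl⟩
    exact g1 p _ _ (h.hB p hp)
  · simp only [Multiset.card_map, Multiset.mem_map]
    rintro q ⟨p, hp, rfl⟩
    exact h1 p _ _ _ (h.hC p hp)
  · simpa using h.hL
  · simp only [Multiset.mem_map]
    rintro q ⟨p, hp, rfl⟩
    exact g3 p
  · simp only [Multiset.mem_map]
    rintro q ⟨p, hp, rfl⟩
    exact h3 p


lemma ind1 (G : SimpleGraph V) (u : V) : Ind G {u} := by simp [Ind]

lemma ind2 {G : SimpleGraph V} {u v : V} (h : ¬ G.Adj u v) : Ind G {u, v} := by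
  have h' : ¬ G.Adj v u := fun k => h k.symm
  simp [Ind, h, h']

lemma ind3 {G : SimpleGraph V} {u v w : V} (h : ¬ G.Adj u v) (h2 : ¬ G.Adj u w)
    (h3 : ¬ G.Adj v w) : Ind G {u, v, w} := by
  have h' : ¬ G.Adj v u := fun k => h k.symm
  have h2' : ¬ G.Adj w u := fun k => h2 k.symm
  have h3' : ¬ G.Adj w v := fun k => h3 k.symm
  simp [Ind, h, h', h2, h2', h3, h3']

lemma GB.full {G : SimpleGraph V} {f : V → ℕ} {U : Finset V} {m n m' n' : ℕ} {p : V × V}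
    (h : GB G f m n p) (hm : m' + 1 ≤ m) (hn : n' + 2 ≤ n) : GB G (dr f U) m' n' p := by
  obtain ⟨h1, h2, h3, h4⟩ := h
  have := dr_le f U p.1
  have := dr_le f U p.2
  exact ⟨h1, by omega, by omega, by omega⟩

lemma GB.part {G : SimpleGraph V} {f : V → ℕ} {U : Finset V} {m n m' n' : ℕ} {p : V × V}
    (h : GB G f m n p) (hU : p.2 ∉ U) (hm : m' + 1 ≤ m ∨ (m' ≤ m ∧ (p.1 ∈ U → f p.1 ≠ m)))
    (hn : n' + 1 ≤ n) : GB G (dr f U) m' n' p := by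
  obtain ⟨h1, h2, h3, h4⟩ := h
  have := dr_le f U p.1
  have := dr_not f U p.2 hU
  refine ⟨h1, ?_, by omega, by omega⟩
  by_cases h : p.1 ∈ U
  · rcases hm with hm | ⟨hm, h5⟩
    · omega
    · have := h5 h; omega
  · have := dr_not f U p.1 h; omega

lemma GC.full {G : SimpleGraph V} {f : V → ℕ} {U : Finset V} {m n s m' n' s' : ℕ}
    {p : V × V × V}
    (h : GC G f m n s p) (hm : m' + 1 ≤ m) (hn : n' + 2 ≤ n) (hs : n' + s' + 3 ≤ n + s) :
    GC G (dr f U) m' n' s' p := by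
  obtain ⟨h1, h2, h3, h4⟩ := h
  have := dr_le f U p.1
  have := dr_le f U p.2.1
  have := dr_le f U p.2.2
  exact ⟨h1, by omega, by omega, by omega⟩

lemma GC.part {G : SimpleGraph V} {f : V → ℕ} {U : Finset V} {m n s m' n' s' : ℕ}
    {p : V × V × V}
    (h : GC G f m n s p) (hU : p.2.2 ∉ U)
    (hno : (p.2.1 ∈ U → p.1 ∈ U) ∧ (p.2.1 ∈ U → p.2.2 ∉ U → f p.1 ≤ f p.2.1))
    (hm : m' + 1 ≤ m ∨ (m' ≤ m ∧ (p.1 ∈ U → f p.1 ≠ m)))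
    (hn : n' + 2 ≤ n ∨ (n' + 1 ≤ n ∧ (p.2.1 ∈ U → f p.1 + f p.2.1 + 1 ≠ n)))
    (hs : n' + s' + 2 ≤ n + s ∨ (n' + s' + 1 ≤ n + s ∧ p.2.1 ∉ U)) :
    GC G (dr f U) m' n' s' p := by
  obtain ⟨h1, h2, h3, h4⟩ := h
  have e1 := dr_le f U p.1
  have e2 := dr_le f U p.2.1
  have e3 := dr_not f U p.2.2 hU
  have e4 := dr_not f U p.1
  have e5 := dr_not f U p.2.1
  by_cases k2 : p.2.1 ∈ U
  · have k1 := hno.1 k2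
    have hf := hno.2 k2 hU
    have hm' : m' + 1 ≤ m ∨ (m' ≤ m ∧ f p.1 ≠ m) := hm.imp id (fun h => ⟨h.1, h.2 k1⟩)
    have hn' : n' + 2 ≤ n ∨ (n' + 1 ≤ n ∧ f p.1 + f p.2.1 + 1 ≠ n) :=
      hn.imp id (fun h => ⟨h.1, h.2 k2⟩)
    have hs' : n' + s' + 2 ≤ n + s := hs.elim id (fun h => absurd k2 h.2)
    clear hm hn hs
    exact ⟨h1, by omega, by omega, by omega⟩
  · have e5 := e5 k2
    have hn' : n' + 1 ≤ n := by omega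
    have hs' : n' + s' + 1 ≤ n + s := by omega
    by_cases k1 : p.1 ∈ U
    · have hm' : m' + 1 ≤ m ∨ (m' ≤ m ∧ f p.1 ≠ m) := hm.imp id (fun h => ⟨h.1, h.2 k1⟩)
      clear hm hn hs
      exact ⟨h1, by omega, by omega, by omega⟩
    · have e4 := e4 k1
      have hm' : m' ≤ m := by omega
      clear hm hn hs
      exact ⟨h1, by omega, by omega, by omega⟩

set_option maxHeartbeats 2000000 in
lemma Inv.step {G : SimpleGraph V} {X : Finset V} {f : V → ℕ} {A : List V}
    {B : Multiset (V × V)} {C : Multiset (V × V × V)} {L : List (Finset V)} {U : Finset V}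
    (h : Inv G X f A B C L) (hUX : U ⊆ X) (hne : U.Nonempty)
    (nB : ∀ q ∈ B, (q.2 ∈ U → q.1 ∈ U))
    (nC : ∀ q ∈ C, (q.2.2 ∈ U → q.2.1 ∈ U) ∧ (q.2.1 ∈ U → q.1 ∈ U) ∧
      (q.2.1 ∈ U → q.2.2 ∉ U → f q.1 ≤ f q.2.1)) : Step G X f U := by
  -- M1: a fully hit triple
  by_cases c1 : ∃ q ∈ C, q.2.2 ∈ U
  · obtain ⟨⟨u, v, w⟩, hq, hw⟩ := c1
    obtain ⟨C', rfl⟩ := Multiset.exists_cons_of_mem hq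
    have hn := nC _ hq
    have hg := h.hC _ hq
    obtain ⟨cov, hA, hB, hC, hL, hI⟩ := h
    simp only [Multiset.card_cons] at hA hB hC hL hg hn hw
    obtain ⟨⟨a1, a2, a3⟩, g⟩ := hg
    simp only at a1 a2 a3 g
    have hv := hn.1 hw
    have hu := hn.2.1 hv
    refine ⟨{u, v, w}, ?_, ind3 a1 a2 a3, by simp, A, B, C', L, ?_, ?_, ?_, ?_, ?_, hI⟩
    · intro x hx; simp at hx; rcases hx with rfl | rfl | rfl <;> assumption
    · intro x hx
      simp only [Finset.mem_sdiff, Finset.mem_insert, Finset.mem_singleton] at hx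
      have := cov x hx.1
      simp only [CB_cons, CC_cons] at this
      clear * - this hx
      tauto
    · exact hA.mono 1 (fun v _ => dr_le f U v) (by omega)
    · exact fun p hp => (hB p hp).full (by omega) (by omega)
    · exact fun p hp => (hC p (Multiset.mem_cons_of_mem hp)).full (by omega) (by omega) (by omega)
    · exact hL.mono 1 (fun _ _ v _ => dr_le f U v) (by omega)
  push Not at c1
  -- M2: a fully hit pair
  by_cases c2 : ∃ q ∈ B, q.2 ∈ U
  · obtain ⟨⟨u, v⟩, hq, hv⟩ := c2
    obtain ⟨B', rfl⟩ := Multiset.exists_cons_of_mem hq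
    have hn := nB _ hq
    have hg := h.hB _ hq
    obtain ⟨cov, hA, hB, hC, hL, hI⟩ := h
    simp only [Multiset.card_cons] at hA hB hC hL hg hn hv
    obtain ⟨a1, g⟩ := hg
    simp only at a1 g
    have hu := hn hv
    refine ⟨{u, v}, ?_, ind2 a1, by simp, A, B', C, L, ?_, ?_, ?_, ?_, ?_, hI⟩
    · intro x hx; simp at hx; rcases hx with rfl | rfl <;> assumption
    · intro x hx
      simp only [Finset.mem_sdiff, Finset.mem_insert, Finset.mem_singleton] at hx
      have := cov x hx.1
      simp only [CB_cons, CC_cons] at this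
      clear * - this hx
      tauto
    · exact hA.mono 1 (fun v _ => dr_le f U v) (by omega)
    · exact fun p hp => (hB p (Multiset.mem_cons_of_mem hp)).full (by omega) (by omega)
    · exact fun p hp => (hC p hp).full (by omega) (by omega) (by omega)
    · exact hL.mono 1 (fun _ _ v _ => dr_le f U v) (by omega)
  push Not at c2
  -- M3: a tight pair in a triple
  by_cases c3 : ∃ q ∈ C, q.2.1 ∈ U ∧
      f q.1 + f q.2.1 + 1 = A.length + 2 * B.card + 3 * C.card + sig L
  · obtain ⟨⟨u, v, w⟩, hq, hv, ht⟩ := c3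
    obtain ⟨C', rfl⟩ := Multiset.exists_cons_of_mem hq
    have hn := nC _ hq
    have hw := c1 _ hq
    have hg := h.hC _ hq
    obtain ⟨cov, hA, hB, hC, hL, hI⟩ := h
    simp only [Multiset.card_cons] at hA hB hC hL hg hn hw hv ht
    obtain ⟨⟨a1, a2, a3⟩, g⟩ := hg
    simp only at a1 a2 a3 g
    have hu := hn.2.1 hv
    have hlen : (A ++ [w]).length = A.length + 1 := by simp
    refine ⟨{u, v}, ?_, ind2 a1, by simp, A ++ [w], B, C', L, ?_, ?_, ?_, ?_, ?_, hI⟩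
    · intro x hx; simp at hx; rcases hx with rfl | rfl <;> assumption
    · intro x hx
      simp only [Finset.mem_sdiff, Finset.mem_insert, Finset.mem_singleton] at hx
      have := cov x hx.1
      simp only [CB_cons, CC_cons] at this
      simp only [List.mem_append, List.mem_singleton]
      clear * - this hx
      tauto
    · apply GoodA.snoc
      · exact hA.mono 1 (fun v _ => dr_le f U v) (by omega)
      · rw [dr_not _ _ _ hw]; omega
    · rw [hlen]
      exact fun p hp => (hB p hp).part (c2 p hp) (by omega) (by omega)
    · rw [hlen]
      exact fun p hp => (hC p (Multiset.mem_cons_of_mem hp)).part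
        (c1 p (Multiset.mem_cons_of_mem hp)) (nC p (Multiset.mem_cons_of_mem hp)).2
        (by omega) (by omega) (by omega)
    · rw [hlen]; exact hL.mono 1 (fun _ _ v _ => dr_le f U v) (by omega)
  push Not at c3
  -- M4: a tight vertex in a triple
  by_cases c4 : ∃ q ∈ C, q.1 ∈ U ∧ f q.1 = B.card + C.card
  · obtain ⟨⟨u, v, w⟩, hq, hu, ht⟩ := c4
    have c3' := fun p hp (hU : p.2.1 ∈ U) => c3 p hp hU
    obtain ⟨C', rfl⟩ := Multiset.exists_cons_of_mem hq
    have hn := nC _ hq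
    have hw := c1 _ hq
    have hg := h.hC _ hq
    obtain ⟨cov, hA, hB, hC, hL, hI⟩ := h
    simp only [Multiset.card_cons] at hA hB hC hL hg hn hw hu ht c3'
    obtain ⟨⟨a1, a2, a3⟩, g⟩ := hg
    simp only at a1 a2 a3 g
    by_cases hv : v ∈ U
    · have hsig : sig (L ++ [{w}]) = sig L + 1 := by simp [sig_snoc]
      refine ⟨{u, v}, ?_, ind2 a1, by simp, A, B, C', L ++ [{w}], ?_, ?_, ?_, ?_, ?_, ?_⟩
      · intro x hx; simp at hx; rcases hx with rfl | rfl <;> assumption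
      · intro x hx
        simp only [Finset.mem_sdiff, Finset.mem_insert, Finset.mem_singleton] at hx
        have := cov x hx.1
        simp only [CB_cons, CC_cons] at this
        simp only [CL_snoc, Finset.mem_singleton]
        clear * - this hx
        tauto
      · exact hA.mono 1 (fun v _ => dr_le f U v) (by omega)
      · rw [hsig]
        exact fun p hp => (hB p hp).part (c2 p hp) (by omega) (by omega)
      · rw [hsig]
        exact fun p hp => (hC p (Multiset.mem_cons_of_mem hp)).part
          (c1 p (Multiset.mem_cons_of_mem hp)) (nC p (Multiset.mem_cons_of_mem hp)).2
          (by omega) (by omega) (by omega)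
      · apply GoodL.snoc
        · exact hL.mono 1 (fun _ _ v _ => dr_le f U v) (by omega)
        · intro x hx
          simp only [Finset.mem_singleton] at hx
          subst hx
          rw [dr_not _ _ _ hw]; omega
      · intro P hP
        simp only [List.mem_append, List.mem_singleton] at hP
        rcases hP with hP | rfl
        · exact hI P hP
        · exact ind1 G w
    · have hsig : sig (L ++ [{v, w}]) ≤ sig L + 2 := by
        rw [sig_snoc]; have := Finset.card_le_two (a := v) (b := w); omega
      refine ⟨{u}, by simpa using hu, ind1 G u, by simp, A, B, C', L ++ [{v, w}],
        ?_, ?_, ?_, ?_, ?_, ?_⟩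
      · intro x hx
        simp only [Finset.mem_sdiff, Finset.mem_singleton] at hx
        have := cov x hx.1
        simp only [CB_cons, CC_cons] at this
        simp only [CL_snoc, Finset.mem_singleton, Finset.mem_insert]
        clear * - this hx
        tauto
      · exact hA.mono 1 (fun v _ => dr_le f U v) (by omega)
      · exact fun p hp => (hB p hp).part (c2 p hp) (by omega) (by omega)
      · exact fun p hp => (hC p (Multiset.mem_cons_of_mem hp)).part
          (c1 p (Multiset.mem_cons_of_mem hp)) (nC p (Multiset.mem_cons_of_mem hp)).2
          (by omega) (Or.inr ⟨by omega, c3' p (Multiset.mem_cons_of_mem hp)⟩) (by omega)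
      · apply GoodL.snoc
        · exact hL.mono 1 (fun _ _ v _ => dr_le f U v) (by omega)
        · intro x hx
          simp only [Finset.mem_singleton, Finset.mem_insert] at hx
          rcases hx with rfl | rfl
          · rw [dr_not _ _ _ hv]; omega
          · rw [dr_not _ _ _ hw]; omega
      · intro P hP
        simp only [List.mem_append, List.mem_singleton] at hP
        rcases hP with hP | rfl
        · exact hI P hP
        · exact ind2 a3
  push Not at c4
  -- M5: a tight vertex in a pair
  by_cases c5 : ∃ q ∈ B, q.1 ∈ U ∧ f q.1 = B.card + C.card
  · obtain ⟨⟨u, v⟩, hq, hu, ht⟩ := c5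
    obtain ⟨B', rfl⟩ := Multiset.exists_cons_of_mem hq
    have hv := c2 _ hq
    have hg := h.hB _ hq
    obtain ⟨cov, hA, hB, hC, hL, hI⟩ := h
    simp only [Multiset.card_cons] at hA hB hC hL hg hu hv ht c3
    obtain ⟨a1, g⟩ := hg
    simp only at a1 g
    have hsig : sig (L ++ [{v}]) = sig L + 1 := by simp [sig_snoc]
    refine ⟨{u}, by simpa using hu, ind1 G u, by simp, A, B', C, L ++ [{v}],
      ?_, ?_, ?_, ?_, ?_, ?_⟩
    · intro x hx
      simp only [Finset.mem_sdiff, Finset.mem_singleton] at hx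
      have := cov x hx.1
      simp only [CB_cons, CC_cons] at this
      simp only [CL_snoc, Finset.mem_singleton]
      clear * - this hx
      tauto
    · exact hA.mono 1 (fun v _ => dr_le f U v) (by omega)
    · rw [hsig]
      exact fun p hp => (hB p (Multiset.mem_cons_of_mem hp)).part
        (c2 p (Multiset.mem_cons_of_mem hp)) (by omega) (by omega)
    · rw [hsig]
      exact fun p hp => (hC p hp).part (c1 p hp) (nC p hp).2
        (by omega) (Or.inr ⟨by omega, c3 p hp⟩) (by omega)
    · apply GoodL.snoc
      · exact hL.mono 1 (fun _ _ v _ => dr_le f U v) (by omega)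
      · intro x hx
        simp only [Finset.mem_singleton] at hx
        subst hx
        rw [dr_not _ _ _ hv]; omega
    · intro P hP
      simp only [List.mem_append, List.mem_singleton] at hP
      rcases hP with hP | rfl
      · exact hI P hP
      · exact ind1 G v
  push Not at c5
  -- M6: a singleton of `A` is hit
  by_cases c6 : ∃ a ∈ A, a ∈ U
  · obtain ⟨a, haU, A', hA', hlen, hcov⟩ := h.hA.hit c6
    obtain ⟨cov, hA, hB, hC, hL, hI⟩ := h
    refine ⟨{a}, by simpa using haU, ind1 G a, by simp, A', B, C, L, ?_, hA', ?_, ?_, ?_, hI⟩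
    · intro x hx
      simp only [Finset.mem_sdiff, Finset.mem_singleton] at hx
      have := cov x hx.1
      have h9 := hcov x
      clear * - this hx h9
      tauto
    · exact fun p hp => (hB p hp).part (c2 p hp) (Or.inr ⟨le_rfl, c5 p hp⟩) (by omega)
    · exact fun p hp => (hC p hp).part (c1 p hp) (nC p hp).2
        (Or.inr ⟨le_rfl, c4 p hp⟩) (Or.inr ⟨by omega, c3 p hp⟩) (by omega)
    · exact hL.mono 1 (fun _ _ v _ => dr_le f U v) (by omega)
  push Not at c6
  have hAU : ∀ v ∈ A, f v ≤ dr f U v + 0 := fun v hv => by rw [dr_not _ _ _ (c6 v hv)]; omega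
  -- M7: a triple hit twice
  by_cases c7 : ∃ q ∈ C, q.2.1 ∈ U
  · obtain ⟨⟨u, v, w⟩, hq, hv⟩ := c7
    obtain ⟨C', rfl⟩ := Multiset.exists_cons_of_mem hq
    have hn := nC _ hq
    have hw := c1 _ hq
    have hg := h.hC _ hq
    obtain ⟨cov, hA, hB, hC, hL, hI⟩ := h
    simp only [Multiset.card_cons] at hA hB hC hL hg hn hw hv
    obtain ⟨⟨a1, a2, a3⟩, g⟩ := hg
    simp only at a1 a2 a3 g
    have hu := hn.2.1 hv
    have hlen : (w :: A).length = A.length + 1 := by simp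
    refine ⟨{u, v}, ?_, ind2 a1, by simp, w :: A, B, C', L, ?_, ⟨?_, ?_⟩, ?_, ?_, ?_, hI⟩
    · intro x hx; simp at hx; rcases hx with rfl | rfl <;> assumption
    · intro x hx
      simp only [Finset.mem_sdiff, Finset.mem_insert, Finset.mem_singleton] at hx
      have := cov x hx.1
      simp only [CB_cons, CC_cons] at this
      simp only [List.mem_cons]
      clear * - this hx
      tauto
    · rw [dr_not _ _ _ hw]; omega
    · exact hA.mono 0 hAU (by omega)
    · rw [hlen]
      exact fun p hp => (hB p hp).part (c2 p hp) (by omega) (by omega)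
    · rw [hlen]
      exact fun p hp => (hC p (Multiset.mem_cons_of_mem hp)).part
        (c1 p (Multiset.mem_cons_of_mem hp)) (nC p (Multiset.mem_cons_of_mem hp)).2
        (by omega) (by omega) (by omega)
    · rw [hlen]; exact hL.mono 1 (fun _ _ v _ => dr_le f U v) (by omega)
  push Not at c7
  -- M8: a part of `L` is hit
  by_cases c8 : ∃ P ∈ L, ∃ a ∈ P, a ∈ U
  · obtain ⟨I, hIU, hne, hInd, L', hL', hs, hI', hcov⟩ := h.hL.hit h.hI c8
    obtain ⟨cov, hA, hB, hC, hL, hI⟩ := h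
    refine ⟨I, hIU, hInd, hne, A, B, C, L', ?_, hA.mono 0 hAU le_rfl, ?_, ?_, hL', hI'⟩
    · intro x hx
      simp only [Finset.mem_sdiff] at hx
      rcases cov x hx.1 with h | h | h | ⟨P, hP, h⟩
      · tauto
      · tauto
      · tauto
      · have h9 : CL L' x ∨ x ∈ I := hcov P hP x h
        clear * - h9 hx
        tauto
    · exact fun p hp => (hB p hp).part (c2 p hp) (Or.inr ⟨le_rfl, c5 p hp⟩) (by omega)
    · exact fun p hp => (hC p hp).part (c1 p hp) (nC p hp).2
        (Or.inr ⟨le_rfl, c4 p hp⟩) (Or.inr ⟨by omega, c3 p hp⟩) (Or.inr ⟨by omega, c7 p hp⟩)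
  push Not at c8
  have hLU : ∀ P ∈ L, ∀ v ∈ P, f v ≤ dr f U v + 0 :=
    fun P hP v hv => by rw [dr_not _ _ _ (c8 P hP v hv)]; omega
  -- M9: a triple hit once
  by_cases c9 : ∃ q ∈ C, q.1 ∈ U
  · obtain ⟨⟨u, v, w⟩, hq, hu⟩ := c9
    obtain ⟨C', rfl⟩ := Multiset.exists_cons_of_mem hq
    have hw := c1 _ hq
    have hv := c7 _ hq
    have hg := h.hC _ hq
    obtain ⟨cov, hA, hB, hC, hL, hI⟩ := h
    simp only [Multiset.card_cons] at hA hB hC hL hg hw hv hu c3 c4 c5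
    obtain ⟨⟨a1, a2, a3⟩, g⟩ := hg
    simp only at a1 a2 a3 g
    refine ⟨{u}, by simpa using hu, ind1 G u, by simp, A, (v, w) ::ₘ B, C', L,
      ?_, ?_, ?_, ?_, ?_, hI⟩
    · intro x hx
      simp only [Finset.mem_sdiff, Finset.mem_singleton] at hx
      have := cov x hx.1
      simp only [CB_cons, CC_cons] at this ⊢
      clear * - this hx
      tauto
    · rw [Multiset.card_cons]
      exact hA.mono 0 hAU (by omega)
    · rw [Multiset.card_cons]
      intro p hp
      rcases Multiset.mem_cons.1 hp with rfl | hp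
      · simp only [GB, dr_not _ _ _ hw, dr_not _ _ _ hv]
        exact ⟨a3, by omega, by omega, by omega⟩
      · exact (hB p hp).part (c2 p hp) (Or.inr ⟨by omega, c5 p hp⟩) (by omega)
    · rw [Multiset.card_cons]
      exact fun p hp' => by
        have hp := Multiset.mem_cons_of_mem (b := (u, v, w)) hp'
        exact (hC p hp).part (c1 p hp) (nC p hp).2 (Or.inr ⟨by omega, c4 p hp⟩)
          (Or.inr ⟨by omega, c3 p hp⟩) (Or.inr ⟨by omega, c7 p hp⟩)
    · rw [Multiset.card_cons]
      exact hL.mono 0 hLU (by omega)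
  push Not at c9
  -- M10: a pair hit once
  have c10 : ∃ q ∈ B, q.1 ∈ U := by
    obtain ⟨x, hx⟩ := hne
    rcases h.cover x (hUX hx) with h1 | ⟨p, hp, rfl | rfl⟩ | ⟨p, hp, rfl | rfl | rfl⟩ | ⟨P, hP, h1⟩
    · exact absurd hx (c6 x h1)
    · exact ⟨p, hp, hx⟩
    · exact absurd hx (c2 p hp)
    · exact absurd hx (c9 p hp)
    · exact absurd hx (c7 p hp)
    · exact absurd hx (c1 p hp)
    · exact absurd hx (c8 P hP x h1)
  obtain ⟨⟨u, v⟩, hq, hu⟩ := c10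
  obtain ⟨B', rfl⟩ := Multiset.exists_cons_of_mem hq
  have hv := c2 _ hq
  have hg := h.hB _ hq
  obtain ⟨cov, hA, hB, hC, hL, hI⟩ := h
  simp only [Multiset.card_cons] at hA hB hC hL hg hu hv c3 c4
  obtain ⟨a1, g⟩ := hg
  simp only at a1 g
  have hlen : (v :: A).length = A.length + 1 := by simp
  refine ⟨{u}, by simpa using hu, ind1 G u, by simp, v :: A, B', C, L,
    ?_, ⟨?_, ?_⟩, ?_, ?_, ?_, hI⟩
  · intro x hx
    simp only [Finset.mem_sdiff, Finset.mem_singleton] at hx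
    have := cov x hx.1
    simp only [CB_cons, CC_cons] at this
    simp only [List.mem_cons]
    clear * - this hx
    tauto
  · rw [dr_not _ _ _ hv]; omega
  · exact hA.mono 0 hAU (by omega)
  · rw [hlen]
    exact fun p hp => (hB p (Multiset.mem_cons_of_mem hp)).part
      (c2 p (Multiset.mem_cons_of_mem hp)) (by omega) (by omega)
  · rw [hlen]
    exact fun p hp => (hC p hp).part (c1 p hp) (nC p hp).2
      (by omega) (Or.inr ⟨by omega, c3 p hp⟩) (Or.inr ⟨by omega, c7 p hp⟩)
  · rw [hlen]; exact hL.mono 0 hLU (by omega)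

lemma Inv.win {G : SimpleGraph V} : ∀ (N : ℕ) (X : Finset V) (f : V → ℕ) (A : List V)
    (B : Multiset (V × V)) (C : Multiset (V × V × V)) (L : List (Finset V)),
    X.card ≤ N → Inv G X f A B C L → OnlineChoosableAux G (N + 1) X f := by
  intro N
  induction N with
  | zero =>
    intro X f A B C L hX h
    have : X = ∅ := by simpa using hX
    subst this
    left; simp
  | succ N ih =>
    intro X f A B C L hX h
    by_cases he : ∃ u ∈ X, ∃ v ∈ X, G.Adj u v
    · refine Or.inr ⟨he, fun U hU hne => ?_⟩
      obtain ⟨B', C', h', nB, nC⟩ := h.norm U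
      obtain ⟨I, hIU, hI, hIne, A1, B1, C1, L1, h1⟩ := h'.step hU hne nB nC
      refine ⟨I, hIU, hI, ih _ _ A1 B1 C1 L1 ?_ h1⟩
      have := Finset.card_sdiff_add_card_eq_card (hIU.trans hU)
      have := hIne.card_pos
      omega
    · push Not at he
      exact Or.inl ⟨he, h.pos⟩

lemma build {G : SimpleGraph V} {k : ℕ} (c : V → Fin k) (hc : ∀ u v, G.Adj u v → c u ≠ c v)
    (h3 : ∀ j, (Finset.univ.filter fun v => c v = j).card ≤ 3) (T : Finset (Fin k)) :
    ∃ (A : List V) (B : Multiset (V × V)) (C : Multiset (V × V × V)),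
      (∀ x, c x ∈ T → x ∈ A ∨ CB B x ∨ CC C x) ∧
      (∀ p ∈ B, ¬ G.Adj p.1 p.2) ∧
      (∀ p ∈ C, ¬ G.Adj p.1 p.2.1 ∧ ¬ G.Adj p.1 p.2.2 ∧ ¬ G.Adj p.2.1 p.2.2) ∧
      A.length + B.card + C.card ≤ T.card ∧
      A.length + 2 * B.card + 3 * C.card =
        ∑ j ∈ T, (Finset.univ.filter fun v => c v = j).card := by
  induction T using Finset.induction_on with
  | empty => exact ⟨[], 0, 0, by simp⟩
  | insert j T hj ih =>
    obtain ⟨A, B, C, h1, h2, h4, h5, h6⟩ := ih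
    have hadj : ∀ u v, c u = j → c v = j → ¬ G.Adj u v :=
      fun u v hu hv h => hc u v h (hu.trans hv.symm)
    have hK : ∀ x, c x = j ↔ x ∈ Finset.univ.filter fun v => c v = j := by simp
    rw [Finset.sum_insert hj, Finset.card_insert_of_notMem hj]
    simp only [Finset.mem_insert]
    have h3j := h3 j
    generalize (Finset.univ.filter fun v => c v = j) = K at *
    obtain h0 | h0 | h0 | h0 : K.card = 0 ∨ K.card = 1 ∨ K.card = 2 ∨ K.card = 3 := by omega
    · refine ⟨A, B, C, ?_, h2, h4, by omega, by omega⟩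
      have : K = ∅ := by simpa using h0
      subst this
      intro x hx
      rcases hx with hx | hx
      · simp [hK] at hx
      · exact h1 x hx
    · obtain ⟨u, rfl⟩ := Finset.card_eq_one.1 h0
      refine ⟨u :: A, B, C, ?_, h2, h4, by simp; omega, by simp; omega⟩
      intro x hx
      have h9 := h1 x
      have := hK x
      simp only [List.mem_cons, Finset.mem_singleton] at *
      clear * - this hx h9
      tauto
    · obtain ⟨u, v, -, rfl⟩ := Finset.card_eq_two.1 h0
      have hu := (hK u).2 (by simp)
      have hv := (hK v).2 (by simp)
      refine ⟨A, (u, v) ::ₘ B, C, ?_, ?_, h4, by simp; omega, by rw [Multiset.card_cons]; omega⟩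
      · intro x hx
        have h9 := h1 x
        have := hK x
        simp only [CB_cons, CC_cons, Finset.mem_insert,
          Finset.mem_singleton] at *
        clear * - this hx h9
        tauto
      · intro p hp
        rcases Multiset.mem_cons.1 hp with rfl | hp
        · exact hadj _ _ hu hv
        · exact h2 p hp
    · obtain ⟨u, v, w, -, -, -, rfl⟩ := Finset.card_eq_three.1 h0
      have hu := (hK u).2 (by simp)
      have hv := (hK v).2 (by simp)
      have hw := (hK w).2 (by simp)
      refine ⟨A, B, (u, v, w) ::ₘ C, ?_, h2, ?_, by simp; omega,
        by rw [Multiset.card_cons]; omega⟩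
      · intro x hx
        have h9 := h1 x
        have := hK x
        simp only [CB_cons, CC_cons, Finset.mem_insert,
          Finset.mem_singleton] at *
        clear * - this hx h9
        tauto
      · intro p hp
        rcases Multiset.mem_cons.1 hp with rfl | hp
        · exact ⟨hadj _ _ hu hv, hadj _ _ hu hw, hadj _ _ hv hw⟩
        · exact h4 p hp

lemma choosable {G : SimpleGraph V} {k : ℕ} (c : V → Fin k)
    (hc : ∀ u v, G.Adj u v → c u ≠ c v)
    (h3 : ∀ j, (Finset.univ.filter fun v => c v = j).card ≤ 3) (hn : Fintype.card V ≤ 2 * k) :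
    OnlineChoosable G Finset.univ (fun _ => k) := by
  obtain ⟨A, B, C, h1, h2, h4, h5, h6⟩ := build c hc h3 Finset.univ
  have hsum : ∑ j, (Finset.univ.filter fun v => c v = j).card = Fintype.card V :=
    (Finset.card_eq_sum_card_fiberwise (f := c) (s := Finset.univ) (t := Finset.univ)
      (by simp)).symm
  rw [hsum] at h6
  simp only [Finset.card_univ, Fintype.card_fin] at h5
  refine ⟨_, Inv.win (Finset.univ : Finset V).card Finset.univ _ A B C [] le_rfl
    ⟨?_, ?_, ?_, ?_, trivial, by simp⟩⟩
  · intro x _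
    have := h1 x (by simp)
    clear * - this
    tauto
  · exact GoodA.const (by omega)
  · intro p hp
    refine ⟨h2 p hp, ?_, ?_, ?_⟩ <;> simp only [sig] <;> omega
  · intro p hp
    refine ⟨h4 p hp, ?_, ?_, ?_⟩ <;> simp only [sig] <;> omega

lemma colorable_of_aux {G : SimpleGraph V} : ∀ (n k : ℕ) (S : Finset V) (f : V → ℕ),
    (∀ v ∈ S, f v = k) → OnlineChoosableAux G n S f →
    ∃ c : V → ℕ, (∀ v ∈ S, c v < k) ∧ ∀ u ∈ S, ∀ v ∈ S, G.Adj u v → c u ≠ c v := by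
  intro n
  induction n with
  | zero => intro k S f _ h; exact h.elim
  | succ n ih =>
    intro k S f hf h
    rcases h with ⟨h1, h2⟩ | ⟨⟨a, ha, b, hb, hab⟩, h⟩
    · refine ⟨fun _ => 0, fun v hv => ?_, fun u hu v hv huv => absurd huv (h1 u hu v hv)⟩
      have := h2 v hv; have := hf v hv
      show 0 < k
      omega
    · obtain ⟨I, hI, hInd, h⟩ := h S (Finset.Subset.refl S) ⟨a, ha⟩
      obtain ⟨c, hc1, hc2⟩ := ih (k - 1) (S \ I) _ (by
        intro v hv
        have hv : v ∈ S := (Finset.mem_sdiff.1 hv).1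
        simp [hv, hf v hv]) h
      have hk : 0 < k := by
        rcases Nat.eq_zero_or_pos k with rfl | hk
        · exfalso
          have : ∀ v ∈ S, v ∈ I := by
            intro v hv
            by_contra hvI
            exact absurd (hc1 v (by simp [hv, hvI])) (by omega)
          exact hInd a (this a ha) b (this b hb) hab
        · exact hk
      refine ⟨fun v => if v ∈ I then k - 1 else c v, ?_, ?_⟩
      · intro v hv
        by_cases hvI : v ∈ I
        · simp [hvI, hk]
        · have := hc1 v (by simp [hv, hvI])
          simp only [hvI, if_false]; omega
      · intro u hu v hv huv
        by_cases huI : u ∈ I <;> by_cases hvI : v ∈ I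
        · exact absurd huv (hInd u huI v hvI)
        · have := hc1 v (by simp [hv, hvI])
          simp only [huI, hvI, if_true, if_false]; omega
        · have := hc1 u (by simp [hu, huI])
          simp only [huI, hvI, if_true, if_false]; omega
        · simp only [huI, hvI, if_false]
          exact hc2 u (by simp [hu, huI]) v (by simp [hv, hvI]) huv

lemma chromNum_colorable (G : SimpleGraph V) : G.Colorable (chromNum G) :=
  Nat.sInf_mem (s := {n | G.Colorable n}) ⟨_, G.colorable_of_fintype⟩

end OnOhba

open Finset in
/-- If every independent set of `G` has size at most 3 and `|V(G)| ≤ 2χ(G)`, then `G` is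
on-line `χ(G)`-choosable (hence `ch^OL(G) = χ(G)`).  Moreover the statement reduces to
complete multipartite graphs: there is a complete multipartite supergraph `H` of `G` on
the same vertex set with all parts of size at most 3 and `|V(G)| ≤ 2χ(H)`. -/
theorem online_ohba_independence_three_reduction (G : SimpleGraph V)
    (hInd : ∀ s : Finset V, (∀ u ∈ s, ∀ v ∈ s, ¬ G.Adj u v) → s.card ≤ 3)
    (hcard : Fintype.card V ≤ 2 * chromNum G) :
    OnlineChoosable G Finset.univ (fun _ => chromNum G) ∧
    onlineChoiceNumber G = chromNum G ∧
    ∃ H : SimpleGraph V, G ≤ H ∧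
      (∃ P : V → ℕ, (∀ u v, H.Adj u v ↔ P u ≠ P v) ∧
        ∀ n : ℕ, (univ.filter fun v => P v = n).card ≤ 3) ∧
      Fintype.card V ≤ 2 * chromNum H := by
  classical
  obtain ⟨c⟩ := OnOhba.chromNum_colorable G
  have hc : ∀ u v, G.Adj u v → c u ≠ c v := fun u v h => c.valid h
  have h3 : ∀ j, (Finset.univ.filter fun v => c v = j).card ≤ 3 := by
    intro j
    apply hInd
    intro u hu v hv huv
    simp only [Finset.mem_filter, Finset.mem_univ, true_and] at hu hv
    exact hc u v huv (hu.trans hv.symm)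
  have hmain := OnOhba.choosable c hc h3 hcard
  refine ⟨hmain, ?_, ?_⟩
  · apply le_antisymm
    · exact Nat.sInf_le hmain
    · refine le_csInf ⟨_, hmain⟩ ?_
      rintro k ⟨n, hk⟩
      obtain ⟨d, hd1, hd2⟩ := OnOhba.colorable_of_aux n k Finset.univ _ (fun _ _ => rfl) hk
      refine Nat.sInf_le ⟨SimpleGraph.Coloring.mk (fun v => (⟨d v, hd1 v (by simp)⟩ : Fin k)) ?_⟩
      intro u v huv h
      exact hd2 u (by simp) v (by simp) huv (by simpa using h)
  · let H : SimpleGraph V :=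
      { Adj := fun u v => c u ≠ c v
        symm := ⟨fun u v h => Ne.symm h⟩
        loopless := ⟨fun u h => h rfl⟩ }
    have hGH : G ≤ H := fun u v h => hc u v h
    refine ⟨H, hGH, ⟨fun v => (c v : ℕ), ?_, ?_⟩, ?_⟩
    · intro u v
      exact not_congr Fin.ext_iff
    · intro n
      apply hInd
      intro u hu v hv huv
      simp only [Finset.mem_filter, Finset.mem_univ, true_and] at hu hv
      exact hc u v huv (Fin.ext (hu.trans hv.symm))
    · have : chromNum G ≤ chromNum H :=
        Nat.sInf_le ((OnOhba.chromNum_colorable H).mono_left hGH)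
      omega
end
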